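/- arXiv:1103.2105 — 5 statements merged into one kernel-verified Lean document; each statement's English description precedes it below -/
import Mathlib

section
/- If f ∈ C satisfies Δ_C(f) ∈ [det] ⊗ C + C ⊗ [det] (as a K-submodule of C ⊗_K C), then f ∈ [det]. Equivalently, the comultiplication induced by Δ_C on the quotient C/[det] is injective. -/
open MvPolynomial

/-- Variables of the differential polynomial ring `C = K{c₁₁, c₁₂, c₂₁, c₂₂}`:
the variable `((i, j), n)` represents `c_{ij}^{(n)}`, the `n`-th derivative of `c_{ij}`. -/
abbrev DVar : Type := (Fin 2 × Fin 2) × ℕ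

/-- The differential polynomial ring `C = K{c₁₁, c₁₂, c₂₁, c₂₂}`. -/
abbrev DiffPolyC (K : Type) [CommRing K] : Type := MvPolynomial DVar K

/-- `det = c₁₁·c₂₂ − c₁₂·c₂₁`. -/
noncomputable def detC (K : Type) [CommRing K] : DiffPolyC K :=
  X ((0, 0), 0) * X ((1, 1), 0) - X ((0, 1), 0) * X ((1, 0), 0)

/-- `D : C → C` is the unique derivation extending the derivation `δ` of `K` and shifting
variables, i.e. `D(c_{ij}^{(n)}) = c_{ij}^{(n+1)}`. -/
def IsDiffStructure {K : Type} [CommRing K] (δ : K → K) (D : DiffPolyC K → DiffPolyC K) : Prop :=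
  (∀ a b : K, δ (a + b) = δ a + δ b) ∧
  (∀ a b : K, δ (a * b) = δ a * b + a * δ b) ∧
  (∀ f g : DiffPolyC K, D (f + g) = D f + D g) ∧
  (∀ f g : DiffPolyC K, D (f * g) = D f * g + f * D g) ∧
  (∀ a : K, D (C a) = C (δ a)) ∧
  (∀ v : DVar, D (X v) = X (v.1, v.2 + 1))

open TensorProduct in
/-- The comultiplication `Δ_C : C → C ⊗_K C`: the unique `K`-algebra homomorphism with
`Δ_C(c_{ij}^{(n)}) = Σ_{k} Σ_{m ≤ n} (n choose m) · c_{ik}^{(m)} ⊗ c_{kj}^{(n−m)}`. -/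
noncomputable def deltaC (K : Type) [CommRing K] :
    DiffPolyC K →ₐ[K] (DiffPolyC K ⊗[K] DiffPolyC K) :=
  aeval fun v : DVar =>
    ∑ k : Fin 2, ∑ m ∈ Finset.range (v.2 + 1),
      (v.2.choose m) •
        ((X ((v.1.1, k), m) : DiffPolyC K) ⊗ₜ[K] (X ((k, v.1.2), v.2 - m) : DiffPolyC K))

open TensorProduct in
/-- The `K`-submodule `p ⊗ q` of `C ⊗_K C` (the span of the pure tensors `a ⊗ b`,
`a ∈ p`, `b ∈ q`). -/
noncomputable def tensorSub {K : Type} [CommRing K] (p q : Submodule K (DiffPolyC K)) :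
    Submodule K (DiffPolyC K ⊗[K] DiffPolyC K) :=
  Submodule.span K {z | ∃ a ∈ p, ∃ b ∈ q, z = a ⊗ₜ[K] b}

/-!
Sending `c_{ij}^{(n)}` to `n!` times the `n`-th coefficient of `M i j` evaluates differential
polynomials at a matrix `M` of power series. Under this evaluation `Δ_C` becomes matrix
multiplication, and `[det]` vanishes at singular matrices. So the `f` of the theorem vanishes at
every product of two singular matrices. The generic singular matrix, over `C/[det]`, is such a
product once `c₂₁` is inverted, hence `c₂₁ ^ N * f ∈ [det]` for some `N`.

It remains to cancel `c₂₁`. For a suitable partial order on monomials the derivatives of `det` have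
pairwise coprime leading monomials with unit coefficients, none of which involves `c₂₁`. A linear
automorphism of `C` that commutes with multiplication by `c₂₁` then identifies `[det]` with the
ideal of these leading monomials, modulo which `c₂₁` is clearly not a zero divisor.
-/

theorem isUnit_natCast_of_ne_zero {R : Type*} [Semiring R] [Algebra ℚ R] {n : ℕ} (hn : n ≠ 0) :
    IsUnit (n : R) := by
  simpa using (Nat.cast_ne_zero.mpr hn).isUnit.map (algebraMap ℚ R)

theorem exists_mem_forall_not_rel {α : Type*} (r : α → α → Prop) [IsStrictOrder α r]
    {s : Finset α} (hs : s.Nonempty) : ∃ m ∈ s, ∀ a ∈ s, ¬ r m a := by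
  let := partialOrderOfSO r
  obtain ⟨m, hm⟩ := s.exists_maximal hs
  exact ⟨m, hm.prop, fun a ha => hm.not_gt ha⟩

theorem mul_mem_restrictSupport {σ R : Type*} [CommSemiring R] {s t u : Set (σ →₀ ℕ)}
    {f g : MvPolynomial σ R} (hf : f ∈ restrictSupport R s)
    (hg : g ∈ restrictSupport R t) (hadd : ∀ a ∈ s, ∀ b ∈ t, a + b ∈ u) :
    f * g ∈ restrictSupport R u :=
  restrictSupport_mono R (Set.add_subset_iff.mpr hadd)
    (restrictSupport_add (R := R) s t ▸ Submodule.mul_mem_mul hf hg)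

section LeadingMonomials

variable {σ R : Type*} [CommRing R] {r : (σ →₀ ℕ) → (σ →₀ ℕ) → Prop}

/-- `f` is a unit multiple of the monomial with exponent `m`, plus terms that are `r`-smaller
than `m`. This is the notion of leading monomial for a relation `r` that need not be a linear
order. -/
def HasLeadingMonomial (r : (σ →₀ ℕ) → (σ →₀ ℕ) → Prop) (f : MvPolynomial σ R) (m : σ →₀ ℕ) :
    Prop :=
  ∃ c : Rˣ, f - monomial m (c : R) ∈ restrictSupport R {μ | r μ m}

theorem hasLeadingMonomial_monomial (m : σ →₀ ℕ) :
    HasLeadingMonomial r (monomial m (1 : R)) m :=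
  ⟨1, by simp⟩

theorem HasLeadingMonomial.mul [IsTrans _ r] (hr : Covariant _ _ (· + ·) r)
    {f g : MvPolynomial σ R} {m n : σ →₀ ℕ}
    (hf : HasLeadingMonomial r f m) (hg : HasLeadingMonomial r g n) :
    HasLeadingMonomial r (f * g) (m + n) := by
  obtain ⟨c, hf⟩ := hf
  obtain ⟨d, hg⟩ := hg
  have hr' {a b : σ →₀ ℕ} (p : σ →₀ ℕ) (hab : r a b) : r (a + p) (b + p) := by
    simpa only [add_comm _ p] using hr p hab
  have hmonomial (p : σ →₀ ℕ) (a : R) : monomial p a ∈ restrictSupport R {p} :=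
    (monomial_mem_restrictSupport R).mpr (.inl rfl)
  refine ⟨c * d, ?_⟩
  have hlower : (f - monomial m (c : R)) * (g - monomial n (d : R)) ∈
      restrictSupport R {μ | r μ (m + n)} :=
    mul_mem_restrictSupport hf hg fun a ha b hb => _root_.trans (hr' b ha) (hr m hb)
  have hleft : monomial m (c : R) * (g - monomial n (d : R)) ∈
      restrictSupport R {μ | r μ (m + n)} :=
    mul_mem_restrictSupport (hmonomial m c) hg fun a ha b hb => by rw [ha]; exact hr m hb
  have hright : (f - monomial m (c : R)) * monomial n (d : R) ∈
      restrictSupport R {μ | r μ (m + n)} :=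
    mul_mem_restrictSupport hf (hmonomial n d) fun a ha b hb => by rw [hb]; exact hr' n ha
  convert add_mem (add_mem hlower hleft) hright using 1
  rw [Units.val_mul, ← monomial_mul]
  ring

theorem surjective_of_hasLeadingMonomial [IsWellFounded _ r]
    (T : MvPolynomial σ R →ₗ[R] MvPolynomial σ R)
    (hT : ∀ m, HasLeadingMonomial r (T (monomial m 1)) m) : Function.Surjective T := by
  rw [← LinearMap.range_eq_top, eq_top_iff, ← (basisMonomials σ R).span_eq, Submodule.span_le]
  rintro _ ⟨m, rfl⟩
  rw [coe_basisMonomials]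
  induction m using IsWellFounded.induction r with
  | ind m ih =>
    obtain ⟨c, hc⟩ := hT m
    rw [restrictSupport_eq_span] at hc
    have hlower : T (monomial m 1) - monomial m (c : R) ∈ LinearMap.range T :=
      Submodule.span_le.mpr (Set.image_subset_iff.mpr ih) hc
    have hlead : monomial m (c : R) ∈ LinearMap.range T := by
      simpa using sub_mem (LinearMap.mem_range_self T (monomial m 1)) hlower
    simpa [smul_monomial] using (LinearMap.range T).smul_mem ((c⁻¹ : Rˣ) : R) hlead

theorem injective_of_hasLeadingMonomial [IsStrictOrder _ r]
    (T : MvPolynomial σ R →ₗ[R] MvPolynomial σ R)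
    (hT : ∀ m, HasLeadingMonomial r (T (monomial m 1)) m) : Function.Injective T := by
  rw [injective_iff_map_eq_zero]
  intro f hf
  by_contra hne
  obtain ⟨m, hm, hmax⟩ := exists_mem_forall_not_rel r (support_nonempty.mpr hne)
  choose c hc using hT
  have hcoeff (μ : σ →₀ ℕ) (hμ : μ ∈ f.support) :
      coeff m (T (monomial μ 1)) = coeff m (monomial μ (c μ : R)) := by
    rw [← sub_eq_zero, ← coeff_sub, ← notMem_support_iff]
    exact fun hlt => hmax μ hμ ((mem_restrictSupport_iff R).mp (hc μ) hlt)
  have hsum : coeff m (T f) = coeff m f * c m := by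
    classical
    calc coeff m (T f) = ∑ μ ∈ f.support, coeff μ f * coeff m (T (monomial μ 1)) := by
          conv_lhs => rw [f.as_sum, map_sum, coeff_sum]
          refine Finset.sum_congr rfl fun μ _ => ?_
          rw [← mul_one (coeff μ f), ← smul_eq_mul, ← smul_monomial, map_smul, coeff_smul,
            smul_eq_mul, smul_eq_mul, mul_one]
      _ = ∑ μ ∈ f.support, if μ = m then coeff μ f * c μ else 0 :=
          Finset.sum_congr rfl fun μ hμ => by rw [hcoeff μ hμ, coeff_monomial, mul_ite, mul_zero]
      _ = coeff m f * c m := by rw [Finset.sum_ite_eq', if_pos hm]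
  rw [hf, coeff_zero, eq_comm, Units.mul_left_eq_zero] at hsum
  exact mem_support_iff.mp hm hsum

end LeadingMonomials

section LeadSubst

variable {σ ι R : Type*} [CommSemiring R]

theorem le_add_iff_of_disjoint {a b m : σ →₀ ℕ} (hab : Disjoint a b) : a ≤ m + b ↔ a ≤ m := by
  refine ⟨fun h v => ?_, fun h => h.trans le_self_add⟩
  have hv : min (a v) (b v) = 0 := DFunLike.congr_fun hab.eq_bot v
  have := h v
  rw [Finsupp.add_apply] at this
  omega

theorem le_add_single_iff {a m : σ →₀ ℕ} {w : σ} {k : ℕ} (hw : a w = 0) :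
    a ≤ m + Finsupp.single w k ↔ a ≤ m := by
  refine le_add_iff_of_disjoint (Finsupp.disjoint_iff.mpr ?_)
  exact Finset.disjoint_of_subset_right Finsupp.support_single_subset (by simp [hw])

open Classical in
/-- The monomial with exponent `m` in which factors with exponent `lead i` have been replaced by
`g i` as long as there are any. For pairwise disjoint `lead i` the result does not depend on the
choices made, see `leadSubst_add`. -/
noncomputable def leadSubst (g : ι → MvPolynomial σ R) (lead : ι → σ →₀ ℕ) (m : σ →₀ ℕ) :
    MvPolynomial σ R :=
  if h : ∃ i, lead i ≠ 0 ∧ lead i ≤ m then g h.choose * leadSubst g lead (m - lead h.choose)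
  else monomial m 1
termination_by m
decreasing_by
  exact (lt_add_of_pos_right _ (pos_of_ne_zero h.choose_spec.1)).trans_eq
    (tsub_add_cancel_of_le h.choose_spec.2)

variable {g : ι → MvPolynomial σ R} {lead : ι → σ →₀ ℕ}

theorem leadSubst_of_forall_not_le {m : σ →₀ ℕ} (hm : ∀ i, ¬ lead i ≤ m) :
    leadSubst g lead m = monomial m 1 := by
  rw [leadSubst, dif_neg fun ⟨i, hi⟩ => hm i hi.2]

theorem exists_leadSubst_eq (hne : ∀ i, lead i ≠ 0) {m : σ →₀ ℕ} (hm : ∃ i, lead i ≤ m) :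
    ∃ i m', m = m' + lead i ∧ leadSubst g lead m = g i * leadSubst g lead m' := by
  have h : ∃ i, lead i ≠ 0 ∧ lead i ≤ m := hm.imp fun i hi => ⟨hne i, hi⟩
  refine ⟨h.choose, m - lead h.choose, (tsub_add_cancel_of_le h.choose_spec.2).symm, ?_⟩
  rw [leadSubst, dif_pos h]

theorem leadSubst_add (hne : ∀ i, lead i ≠ 0) (hdisj : Pairwise (Function.onFun Disjoint lead))
    (m : σ →₀ ℕ) (j : ι) : leadSubst g lead (m + lead j) = g j * leadSubst g lead m := by
  induction m using WellFoundedLT.induction generalizing j with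
  | ind m ih =>
    obtain ⟨i, p, hp, hi⟩ := exists_leadSubst_eq (g := g) hne (m := m + lead j)
      ⟨j, le_add_self⟩
    obtain rfl | hij := eq_or_ne i j
    · rw [hi, add_right_cancel hp]
    · obtain ⟨q, rfl⟩ := exists_add_of_le
        ((le_add_iff_of_disjoint (m := m) (hdisj hij)).mp (hp ▸ le_add_self))
      have hlt : q < lead i + q := lt_add_of_pos_left q (pos_of_ne_zero (hne i))
      have hpq : p = q + lead j := by
        rw [add_assoc, add_comm (lead i)] at hp
        exact (add_right_cancel hp).symm
      rw [hi, hpq, ih q hlt j, add_comm (lead i), ih q hlt i]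
      ring

theorem leadSubst_add_single (hne : ∀ i, lead i ≠ 0)
    (hdisj : Pairwise (Function.onFun Disjoint lead)) {w : σ} (hw : ∀ i, lead i w = 0)
    (m : σ →₀ ℕ) :
    leadSubst g lead (m + Finsupp.single w 1) = X w * leadSubst g lead m := by
  induction m using WellFoundedLT.induction with
  | ind m ih =>
    by_cases hm : ∃ i, lead i ≤ m
    · obtain ⟨i, p, rfl, hi⟩ := exists_leadSubst_eq (g := g) hne hm
      rw [hi, add_right_comm, leadSubst_add hne hdisj,
        ih p (lt_add_of_pos_right p (pos_of_ne_zero (hne i)))]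
      ring
    · have hmw : ∀ i, ¬ lead i ≤ m + Finsupp.single w 1 := fun i hi =>
        hm ⟨i, (le_add_single_iff (hw i)).mp hi⟩
      rw [leadSubst_of_forall_not_le hmw, leadSubst_of_forall_not_le (not_exists.mp hm), X,
        monomial_mul, one_mul, add_comm]

variable (g lead) in
/-- The linear extension of `leadSubst`. It carries the monomial ideal of the `lead i` to the
ideal of the `g i`, see `leadSubstLinear_mem_span_iff`. -/
noncomputable def leadSubstLinear : MvPolynomial σ R →ₗ[R] MvPolynomial σ R :=
  (basisMonomials σ R).constr R (leadSubst g lead)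

theorem leadSubstLinear_monomial (m : σ →₀ ℕ) :
    leadSubstLinear g lead (monomial m 1) = leadSubst g lead m := by
  simpa [leadSubstLinear] using (basisMonomials σ R).constr_basis R (leadSubst g lead) m

theorem leadSubstLinear_monomial_mul {q : MvPolynomial σ R} {p : σ →₀ ℕ}
    (hq : ∀ m, leadSubst g lead (m + p) = q * leadSubst g lead m) (f : MvPolynomial σ R) :
    leadSubstLinear g lead (monomial p 1 * f) = q * leadSubstLinear g lead f := by
  have hcomp : leadSubstLinear g lead ∘ₗ LinearMap.mulLeft R (monomial p 1) =
      LinearMap.mulLeft R q ∘ₗ leadSubstLinear g lead :=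
    (basisMonomials σ R).ext fun m => by
      simp only [coe_basisMonomials, LinearMap.comp_apply, LinearMap.mulLeft_apply, monomial_mul,
        mul_one, leadSubstLinear_monomial, add_comm p, hq]
  exact LinearMap.congr_fun hcomp f

theorem leadSubstLinear_mem_span_iff (hne : ∀ i, lead i ≠ 0)
    (hdisj : Pairwise (Function.onFun Disjoint lead))
    (hbij : Function.Bijective (leadSubstLinear g lead)) (f : MvPolynomial σ R) :
    leadSubstLinear g lead f ∈ Ideal.span (Set.range g) ↔
      f ∈ Ideal.span ((fun m => monomial m (1 : R)) '' Set.range lead) := by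
  have hmul (i : ι) := leadSubstLinear_monomial_mul (g := g) (p := lead i)
    fun m => leadSubst_add hne hdisj m i
  have himage : ∀ y ∈ Ideal.span (Set.range g), y ∈ Submodule.map (leadSubstLinear g lead)
      ((Ideal.span ((fun m => monomial m (1 : R)) '' Set.range lead)).restrictScalars R) := by
    intro y hy
    induction hy using Submodule.closure_induction with
    | zero => exact zero_mem _
    | add _ _ _ _ hx hy => exact add_mem hx hy
    | smul_mem a x hx =>
      obtain ⟨i, rfl⟩ := hx
      obtain ⟨s, rfl⟩ := hbij.2 a
      refine ⟨monomial (lead i) 1 * s, Ideal.mul_mem_right _ _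
        (Ideal.subset_span ⟨_, ⟨i, rfl⟩, rfl⟩), ?_⟩
      rw [hmul, smul_eq_mul, mul_comm]
  constructor
  · intro hf
    obtain ⟨h, hh, heq⟩ := himage _ hf
    exact hbij.1 heq ▸ hh
  · intro hf
    induction hf using Submodule.closure_induction with
    | zero => rw [map_zero]; exact zero_mem _
    | add _ _ _ _ hx hy => rw [map_add]; exact add_mem hx hy
    | smul_mem a x hx =>
      obtain ⟨_, ⟨i, rfl⟩, rfl⟩ := hx
      rw [smul_eq_mul, mul_comm, hmul]
      exact Ideal.mul_mem_right _ _ (Ideal.subset_span ⟨i, rfl⟩)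

theorem mem_span_monomial_of_X_mul_mem {w : σ} (hw : ∀ i, lead i w = 0) {f : MvPolynomial σ R}
    (hf : X w * f ∈ Ideal.span ((fun m => monomial m (1 : R)) '' Set.range lead)) :
    f ∈ Ideal.span ((fun m => monomial m (1 : R)) '' Set.range lead) := by
  rw [mem_ideal_span_monomial_image] at hf ⊢
  intro m hm
  have hmw : m + Finsupp.single w 1 ∈ (X w * f).support := by
    rwa [mem_support_iff, add_comm, coeff_X_mul, ← mem_support_iff]
  obtain ⟨_, ⟨i, rfl⟩, hle⟩ := hf _ hmw
  exact ⟨_, ⟨i, rfl⟩, (le_add_single_iff (hw i)).mp hle⟩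

end LeadSubst

section DisjointLeads

variable {σ ι R : Type*} [CommRing R] {g : ι → MvPolynomial σ R} {lead : ι → σ →₀ ℕ}
  {r : (σ →₀ ℕ) → (σ →₀ ℕ) → Prop} [IsTrans _ r]

theorem hasLeadingMonomial_leadSubst (hr : Covariant _ _ (· + ·) r)
    (hne : ∀ i, lead i ≠ 0) (hg : ∀ i, HasLeadingMonomial r (g i) (lead i)) (m : σ →₀ ℕ) :
    HasLeadingMonomial r (leadSubst g lead m) m := by
  induction m using WellFoundedLT.induction with
  | ind m ih =>
    by_cases hm : ∃ i, lead i ≤ m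
    · obtain ⟨i, p, rfl, hi⟩ := exists_leadSubst_eq (g := g) hne hm
      rw [hi, add_comm]
      exact (hg i).mul hr (ih p (lt_add_of_pos_right p (pos_of_ne_zero (hne i))))
    · rw [leadSubst_of_forall_not_le (not_exists.mp hm)]
      exact hasLeadingMonomial_monomial m

theorem leadSubstLinear_bijective [IsWellFounded _ r]
    (hr : Covariant _ _ (· + ·) r) (hne : ∀ i, lead i ≠ 0)
    (hg : ∀ i, HasLeadingMonomial r (g i) (lead i)) :
    Function.Bijective (leadSubstLinear g lead) := by
  have hlead (m : σ →₀ ℕ) : HasLeadingMonomial r (leadSubstLinear g lead (monomial m 1)) m := by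
    rw [leadSubstLinear_monomial]
    exact hasLeadingMonomial_leadSubst hr hne hg m
  have : IsStrictOrder _ r := {}
  exact ⟨injective_of_hasLeadingMonomial _ hlead, surjective_of_hasLeadingMonomial _ hlead⟩

theorem mem_span_of_X_mul_mem [IsWellFounded _ r]
    (hr : Covariant _ _ (· + ·) r) (hne : ∀ i, lead i ≠ 0)
    (hdisj : Pairwise (Function.onFun Disjoint lead))
    (hg : ∀ i, HasLeadingMonomial r (g i) (lead i)) {w : σ} (hw : ∀ i, lead i w = 0)
    {f : MvPolynomial σ R} (hf : X w * f ∈ Ideal.span (Set.range g)) :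
    f ∈ Ideal.span (Set.range g) := by
  have hbij := leadSubstLinear_bijective hr hne hg
  obtain ⟨s, rfl⟩ := hbij.2 f
  rw [leadSubstLinear_mem_span_iff hne hdisj hbij]
  refine mem_span_monomial_of_X_mul_mem hw ?_
  rwa [← leadSubstLinear_mem_span_iff hne hdisj hbij, X,
    leadSubstLinear_monomial_mul (leadSubst_add_single hne hdisj hw)]

end DisjointLeads

section Spread

variable {σ : Type*} (e : σ → ℕ)

/-- The monomials `μ` and `m` have the same total level `∑ e`, but the levels of the variables of
`μ` have a larger sum of squares, i.e. are spread out further. As a relation on monomials it is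
read with `μ` as the smaller one. -/
def MoreSpread (μ m : σ →₀ ℕ) : Prop :=
  Finsupp.weight e μ = Finsupp.weight e m ∧
    Finsupp.weight (e ^ 2) m < Finsupp.weight (e ^ 2) μ

theorem weight_sq_le_sq_weight (m : σ →₀ ℕ) :
    Finsupp.weight (e ^ 2) m ≤ Finsupp.weight e m ^ 2 := by
  induction m using Finsupp.induction_linear with
  | zero => simp
  | add a b ha hb =>
    simp only [map_add, add_sq']
    exact (add_le_add ha hb).trans le_self_add
  | single v k =>
    simp only [Finsupp.weight_single, Pi.pow_apply, smul_eq_mul, mul_pow]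
    exact Nat.mul_le_mul_right _ (Nat.le_self_pow two_ne_zero k)

instance : IsTrans _ (MoreSpread e) where
  trans _ _ _ hab hbc := ⟨hab.1.trans hbc.1, hbc.2.trans hab.2⟩

instance : IsWellFounded _ (MoreSpread e) where
  wf := Subrelation.wf (fun {μ m} h => by
      have := weight_sq_le_sq_weight e μ
      rw [h.1] at this
      have := h.2
      simp only [InvImage, WellFoundedRelation.rel, h.1]
      omega)
    (measure fun m : σ →₀ ℕ => Finsupp.weight e m ^ 2 - Finsupp.weight (e ^ 2) m).wf

theorem covariant_add_moreSpread : Covariant _ _ (· + ·) (MoreSpread e) := by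
  rintro p a b ⟨hweight, hsq⟩
  simp only [MoreSpread, map_add]
  exact ⟨by rw [hweight], by gcongr⟩

variable {e} in
theorem moreSpread_single_add_single {u v u' v' : σ} {c : ℕ} (huv : e u + e v = 2 * c)
    (hu : e u ≠ c) (hu' : e u' = c) (hv' : e v' = c) :
    MoreSpread e (Finsupp.single u 1 + Finsupp.single v 1)
      (Finsupp.single u' 1 + Finsupp.single v' 1) := by
  simp only [MoreSpread, map_add, Finsupp.weight_single, one_smul, Pi.pow_apply, hu', hv', huv]
  refine ⟨two_mul c, ?_⟩
  zify at huv hu ⊢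
  nlinarith [sq_pos_of_ne_zero (sub_ne_zero.mpr hu)]

end Spread

section DetIdeal

open Finset.HasAntidiagonal (antidiagonal mem_antidiagonal)

theorem iterate_mul_of_leibniz {R : Type*} [CommSemiring R] (D : R →+ R)
    (hD : ∀ a b, D (a * b) = D a * b + a * D b) (n : ℕ) (a b : R) :
    D^[n] (a * b) =
      ∑ p ∈ antidiagonal n, n.choose p.1 • (D^[p.1] a * D^[p.2] b) := by
  induction n with
  | zero => simp
  | succ n ih =>
    rw [Finset.sum_antidiagonal_choose_succ_nsmul (fun i j => D^[i] a * D^[j] b) n,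
      Function.iterate_succ_apply', ih, map_sum, ← Finset.sum_add_distrib]
    refine Finset.sum_congr rfl fun p hp => ?_
    rw [map_nsmul, hD, ← Function.iterate_succ_apply' D, ← Function.iterate_succ_apply' D,
      smul_add, add_comm, Nat.choose_symm_of_eq_add (mem_antidiagonal.mp hp).symm]

/-- The `n`-th derivative of `det`, written out by the Leibniz rule. It does not involve the
derivation of `K`, because the coefficients of `det` are integers. -/
noncomputable def detDeriv (K : Type) [CommRing K] (n : ℕ) : DiffPolyC K :=
  ∑ p ∈ antidiagonal n, n.choose p.1 •
    (X ((0, 0), p.1) * X ((1, 1), p.2) - X ((0, 1), p.1) * X ((1, 0), p.2))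

/-- The differential ideal `[det]`. -/
noncomputable def detIdeal (K : Type) [CommRing K] : Ideal (DiffPolyC K) :=
  Ideal.span (Set.range (detDeriv K))

variable {K : Type} [CommRing K] {δ : K → K} {D : DiffPolyC K → DiffPolyC K}

theorem iterate_X (hD : IsDiffStructure δ D) (v : Fin 2 × Fin 2) (n : ℕ) :
    D^[n] (X (v, 0)) = X (v, n) := by
  obtain ⟨-, -, -, -, -, hX⟩ := hD
  induction n with
  | zero => rfl
  | succ n ih => rw [Function.iterate_succ_apply', ih, hX]

theorem iterate_detC (hD : IsDiffStructure δ D) (n : ℕ) : D^[n] (detC K) = detDeriv K n := by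
  have hDX := iterate_X hD
  obtain ⟨-, -, hadd, hmul, -, -⟩ := hD
  obtain ⟨D, rfl⟩ : ∃ D' : DiffPolyC K →+ DiffPolyC K, ⇑D' = D := ⟨AddMonoidHom.mk' D hadd, rfl⟩
  simp only [detC, detDeriv, iterate_map_sub, iterate_mul_of_leibniz D hmul, hDX, smul_sub,
    Finset.sum_sub_distrib]

theorem span_iterate_detC (hD : IsDiffStructure δ D) :
    Ideal.span {g : DiffPolyC K | ∃ i : ℕ, g = D^[i] (detC K)} = detIdeal K := by
  simp only [iterate_detC hD, detIdeal, Set.range, eq_comm]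

end DetIdeal

section DetLeadingMonomials

open Finset.HasAntidiagonal (antidiagonal mem_antidiagonal)

/-- The level `2n + 1 + j - i` of the variable `c_{ij}^{(n)}`. In each term of `detDeriv K n` the
levels of the two variables add up to `2(n + 1)`, and in exactly one term they are equal. -/
def level (v : DVar) : ℕ := 2 * v.2 + v.1.2 + v.1.1.rev

/-- The exponent of the monomial `c_{1,k+1}^{(i)} c_{2,2-k}^{(j)}`, in the indexing from `1` of the
matrix entries. Up to sign and a binomial factor these are the terms of `detDeriv K (i + j)`. -/
noncomputable def detExponent (k : Fin 2) (i j : ℕ) : DVar →₀ ℕ :=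
  Finsupp.single ((0, k), i) 1 + Finsupp.single ((1, k.rev), j) 1

/-- The exponent of the leading monomial of `detDeriv K n`, namely of the term in which both
variables have level `n + 1`. -/
noncomputable def detLead (n : ℕ) : DVar →₀ ℕ :=
  detExponent (Fin.ofNat 2 n) (n / 2) (n - n / 2)

theorem level_add_level (k : Fin 2) (i j : ℕ) :
    level ((0, k), i) + level ((1, k.rev), j) = 2 * (i + j + 1) := by
  fin_cases k <;> simp [level] <;> ring

theorem level_eq_of_detLead_ne_zero {n : ℕ} {v : DVar} (hv : detLead n v ≠ 0) :
    level v = n + 1 := by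
  have hmem : v = ((0, Fin.ofNat 2 n), n / 2) ∨ v = ((1, (Fin.ofNat 2 n).rev), n - n / 2) := by
    simp only [detLead, detExponent, Finsupp.add_apply, Finsupp.single_apply] at hv
    grind
  rcases hmem with rfl | rfl
  · simp only [level, Fin.val_ofNat, Fin.rev_zero, Fin.val_last]
    omega
  · simp only [level, Fin.val_ofNat, Fin.val_rev, Fin.val_one]
    omega

theorem pairwise_disjoint_detLead : Pairwise (Function.onFun Disjoint detLead) := by
  intro m n hmn
  refine Finsupp.disjoint_iff.mpr (Finset.disjoint_left.mpr fun v hm hn => hmn ?_)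
  rw [Finsupp.mem_support_iff] at hm hn
  have := level_eq_of_detLead_ne_zero hm
  have := level_eq_of_detLead_ne_zero hn
  omega

theorem detLead_ne_zero (n : ℕ) : detLead n ≠ 0 := by
  simp [detLead, detExponent]

theorem detLead_apply_c21 (n : ℕ) : detLead n ((1, 0), 0) = 0 := by
  by_contra h
  exact n.succ_ne_zero (level_eq_of_detLead_ne_zero h).symm

theorem moreSpread_detExponent {n : ℕ} {k : Fin 2} {i j : ℕ} (hij : i + j = n)
    (hne : (k, i) ≠ (Fin.ofNat 2 n, n / 2)) :
    MoreSpread level (detExponent k i j) (detLead n) := by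
  refine moreSpread_single_add_single (c := n + 1) (hij ▸ level_add_level k i j) ?_
    (level_eq_of_detLead_ne_zero ?_) (level_eq_of_detLead_ne_zero ?_)
  · contrapose! hne
    simp only [level, Fin.rev_zero, Fin.val_last] at hne
    ext <;> simp <;> omega
  · simp [detLead, detExponent]
  · simp [detLead, detExponent]

variable (K : Type) [CommRing K]

theorem detDeriv_eq_sum (n : ℕ) :
    detDeriv K n = ∑ q ∈ Finset.univ ×ˢ antidiagonal n,
      monomial (detExponent q.1 q.2.1 q.2.2) ((-1 : K) ^ (q.1 : ℕ) * n.choose q.2.1) := by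
  rw [Finset.sum_product, Fin.sum_univ_two, detDeriv, ← Finset.sum_add_distrib]
  refine Finset.sum_congr rfl fun p _ => ?_
  simp only [X, monomial_mul, smul_sub, ← map_nsmul]
  simp [detExponent, sub_eq_add_neg]

theorem hasLeadingMonomial_detDeriv [Algebra ℚ K] (n : ℕ) :
    HasLeadingMonomial (MoreSpread level) (detDeriv K n) (detLead n) := by
  have hchoose : IsUnit (n.choose (n / 2) : K) :=
    isUnit_natCast_of_ne_zero (Nat.choose_pos (Nat.div_le_self n 2)).ne'
  obtain ⟨c, hc⟩ := (isUnit_one.neg.pow (Fin.ofNat 2 n : ℕ)).mul hchoose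
  have hmem : (Fin.ofNat 2 n, (n / 2, n - n / 2)) ∈ Finset.univ ×ˢ antidiagonal n := by
    simp [Nat.add_sub_of_le (Nat.div_le_self n 2)]
  refine ⟨c, ?_⟩
  rw [hc, detDeriv_eq_sum, ← Finset.add_sum_erase _ _ hmem, detLead, add_sub_cancel_left]
  refine sum_mem fun q hq => (monomial_mem_restrictSupport K).mpr (.inl ?_)
  obtain ⟨hne, hq⟩ := Finset.mem_erase.mp hq
  have hsum := mem_antidiagonal.mp (Finset.mem_product.mp hq).2
  refine moreSpread_detExponent hsum fun h => hne ?_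
  grind

theorem mem_detIdeal_of_X_mul_mem [Algebra ℚ K] {f : DiffPolyC K}
    (hf : X ((1, 0), 0) * f ∈ detIdeal K) : f ∈ detIdeal K :=
  mem_span_of_X_mul_mem (covariant_add_moreSpread level) detLead_ne_zero
    pairwise_disjoint_detLead (hasLeadingMonomial_detDeriv K) detLead_apply_c21 hf

end DetLeadingMonomials

section TaylorEvaluation

open Finset.HasAntidiagonal (antidiagonal mem_antidiagonal)
open scoped PowerSeries

theorem factorial_mul_coeff_mul {R : Type*} [CommSemiring R] (A B : R⟦X⟧) (n : ℕ) :
    (n.factorial : R) * PowerSeries.coeff n (A * B) =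
      ∑ p ∈ antidiagonal n, n.choose p.1 •
        (p.1.factorial * PowerSeries.coeff p.1 A * (p.2.factorial * PowerSeries.coeff p.2 B)) := by
  rw [PowerSeries.coeff_mul, Finset.mul_sum]
  refine Finset.sum_congr rfl fun p hp => ?_
  rw [← mem_antidiagonal.mp hp, ← Nat.add_choose_mul_factorial_mul_factorial,
    ← Nat.choose_symm_add, nsmul_eq_mul]
  push_cast
  ring

variable {K : Type} [CommRing K] {R : Type*} [CommRing R] [Algebra K R]

/-- The evaluation of differential polynomials at a matrix `M` of power series: `c_{ij}^{(n)}` goes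
to the constant term of the `n`-th derivative of `M i j`. -/
noncomputable def evalSeries (M : Matrix (Fin 2) (Fin 2) R⟦X⟧) : DiffPolyC K →ₐ[K] R :=
  aeval fun v => (v.2.factorial : R) * PowerSeries.coeff v.2 (M v.1.1 v.1.2)

theorem evalSeries_X (M : Matrix (Fin 2) (Fin 2) R⟦X⟧) (v : DVar) :
    evalSeries (K := K) M (X v) = v.2.factorial * PowerSeries.coeff v.2 (M v.1.1 v.1.2) :=
  aeval_X _ v

theorem evalSeries_detDeriv (M : Matrix (Fin 2) (Fin 2) R⟦X⟧) (n : ℕ) :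
    evalSeries M (detDeriv K n) = n.factorial * PowerSeries.coeff n M.det := by
  simp only [Matrix.det_fin_two, map_sub, mul_sub, factorial_mul_coeff_mul, detDeriv, map_sum,
    map_nsmul, map_mul, evalSeries_X, smul_sub, Finset.sum_sub_distrib]

theorem detIdeal_le_ker_evalSeries {M : Matrix (Fin 2) (Fin 2) R⟦X⟧} (hM : M.det = 0) :
    detIdeal K ≤ RingHom.ker (evalSeries (K := K) M) := by
  rw [detIdeal, Ideal.span_le]
  rintro _ ⟨n, rfl⟩
  simp [evalSeries_detDeriv, hM]

theorem productMap_evalSeries_deltaC (A B : Matrix (Fin 2) (Fin 2) R⟦X⟧) (f : DiffPolyC K) :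
    Algebra.TensorProduct.productMap (evalSeries A) (evalSeries B) (deltaC K f) =
      evalSeries (A * B) f := by
  have hcomp : (Algebra.TensorProduct.productMap (evalSeries A) (evalSeries B)).comp (deltaC K) =
      evalSeries (A * B) := by
    refine MvPolynomial.algHom_ext fun v => ?_
    simp only [AlgHom.comp_apply, deltaC, aeval_X, map_sum, map_nsmul, evalSeries_X,
      Algebra.TensorProduct.productMap_apply_tmul, Matrix.mul_apply, Finset.mul_sum,
      factorial_mul_coeff_mul, Finset.Nat.sum_antidiagonal_eq_sum_range_succ_mk]
  exact DFunLike.congr_fun hcomp f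

theorem tensorSub_sup_tensorSub_le_ker {φ ψ : DiffPolyC K →ₐ[K] R} {I : Ideal (DiffPolyC K)}
    (hφ : I ≤ RingHom.ker φ) (hψ : I ≤ RingHom.ker ψ) :
    tensorSub (I.restrictScalars K) ⊤ ⊔ tensorSub ⊤ (I.restrictScalars K) ≤
      LinearMap.ker (Algebra.TensorProduct.productMap φ ψ).toLinearMap := by
  refine sup_le (Submodule.span_le.mpr ?_) (Submodule.span_le.mpr ?_)
  · rintro _ ⟨a, ha, b, -, rfl⟩
    simp [RingHom.mem_ker.mp (hφ ha)]
  · rintro _ ⟨a, -, b, hb, rfl⟩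
    simp [RingHom.mem_ker.mp (hψ hb)]

theorem evalSeries_mul_eq_zero {A B : Matrix (Fin 2) (Fin 2) R⟦X⟧} (hA : A.det = 0)
    (hB : B.det = 0) {f : DiffPolyC K}
    (hf : deltaC K f ∈ tensorSub ((detIdeal K).restrictScalars K) ⊤ ⊔
      tensorSub ⊤ ((detIdeal K).restrictScalars K)) :
    evalSeries (A * B) f = 0 := by
  rw [← productMap_evalSeries_deltaC]
  exact tensorSub_sup_tensorSub_le_ker (detIdeal_le_ker_evalSeries hA)
    (detIdeal_le_ker_evalSeries hB) hf

theorem exists_eq_mul_of_det_eq_zero {S : Type*} [CommRing S] {M : Matrix (Fin 2) (Fin 2) S}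
    (hdet : M.det = 0) (hunit : IsUnit (M 1 0)) :
    ∃ A B : Matrix (Fin 2) (Fin 2) S, A.det = 0 ∧ B.det = 0 ∧ M = A * B := by
  obtain ⟨u, hu⟩ := hunit
  have hM : M 0 0 * M 1 1 = M 0 1 * u := by
    rwa [Matrix.det_fin_two, sub_eq_zero, ← hu] at hdet
  refine ⟨!![M 0 0, 0; M 1 0, 0], !![1, M 1 1 * ↑u⁻¹; 0, 0], by simp, by simp, ?_⟩
  rw [M.eta_fin_two]
  simp [← mul_assoc, hM, ← hu, mul_right_comm]

variable [Algebra ℚ R]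

/-- The matrix of power series with Taylor coefficients `φ (c_{ij}^{(n)}) / n!`. It exhibits every
`φ` as an evaluation, see `evalSeries_taylorMatrix`. -/
noncomputable def taylorMatrix (φ : DiffPolyC K →ₐ[K] R) : Matrix (Fin 2) (Fin 2) R⟦X⟧ :=
  .of fun i j => .mk fun n => (n.factorial : ℚ)⁻¹ • φ (X ((i, j), n))

theorem evalSeries_taylorMatrix (φ : DiffPolyC K →ₐ[K] R) : evalSeries (taylorMatrix φ) = φ := by
  refine MvPolynomial.algHom_ext fun v => ?_
  rw [evalSeries_X, taylorMatrix, Matrix.of_apply, PowerSeries.coeff_mk, ← nsmul_eq_mul,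
    ← Nat.cast_smul_eq_nsmul ℚ, smul_inv_smul₀ (mod_cast v.2.factorial_ne_zero)]

theorem det_taylorMatrix_eq_zero {φ : DiffPolyC K →ₐ[K] R}
    (hφ : detIdeal K ≤ RingHom.ker φ) : (taylorMatrix φ).det = 0 := by
  ext n
  have hn : (n.factorial : R) * PowerSeries.coeff n (taylorMatrix φ).det = 0 := by
    rw [← evalSeries_detDeriv (K := K), evalSeries_taylorMatrix]
    exact hφ (Ideal.subset_span ⟨n, rfl⟩)
  exact (isUnit_natCast_of_ne_zero n.factorial_ne_zero).mul_right_eq_zero.mp hn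

theorem apply_eq_zero_of_deltaC_mem {φ : DiffPolyC K →ₐ[K] R} (hφ : detIdeal K ≤ RingHom.ker φ)
    (hunit : IsUnit (φ (X ((1, 0), 0)))) {f : DiffPolyC K}
    (hf : deltaC K f ∈ tensorSub ((detIdeal K).restrictScalars K) ⊤ ⊔
      tensorSub ⊤ ((detIdeal K).restrictScalars K)) :
    φ f = 0 := by
  have hunit' : IsUnit (taylorMatrix φ 1 0) := by
    rw [PowerSeries.isUnit_iff_constantCoeff]
    simpa [taylorMatrix] using hunit
  obtain ⟨A, B, hA, hB, hAB⟩ :=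
    exists_eq_mul_of_det_eq_zero (det_taylorMatrix_eq_zero hφ) hunit'
  rw [← evalSeries_taylorMatrix φ, hAB]
  exact evalSeries_mul_eq_zero hA hB hf

theorem exists_X_pow_mul_mem_detIdeal [Algebra ℚ K] {f : DiffPolyC K}
    (hf : deltaC K f ∈ tensorSub ((detIdeal K).restrictScalars K) ⊤ ⊔
      tensorSub ⊤ ((detIdeal K).restrictScalars K)) :
    ∃ N : ℕ, X ((1, 0), 0) ^ N * f ∈ detIdeal K := by
  let c := Ideal.Quotient.mkₐ K (detIdeal K) (X ((1, 0), 0))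
  let L := Localization.Away c
  let φ : DiffPolyC K →ₐ[K] L :=
    (IsScalarTower.toAlgHom K (DiffPolyC K ⧸ detIdeal K) L).comp
      (Ideal.Quotient.mkₐ K (detIdeal K))
  have hφ : detIdeal K ≤ RingHom.ker φ := fun g hg => by
    simp [φ, RingHom.mem_ker, Ideal.Quotient.eq_zero_iff_mem.mpr hg]
  have hunit : IsUnit (φ (X ((1, 0), 0))) :=
    IsLocalization.Away.algebraMap_isUnit c
  let : Algebra ℚ L := Algebra.compHom L (algebraMap ℚ K)
  have hzero : algebraMap _ L (Ideal.Quotient.mk (detIdeal K) f) = 0 :=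
    apply_eq_zero_of_deltaC_mem hφ hunit hf
  obtain ⟨⟨_, N, rfl⟩, hN⟩ := (IsLocalization.map_eq_zero_iff (Submonoid.powers c) L _).mp hzero
  refine ⟨N, ?_⟩
  rwa [← Ideal.Quotient.eq_zero_iff_mem, map_mul, map_pow]

end TaylorEvaluation

theorem mem_detIdeal_of_deltaC_mem_general {K : Type} [CommRing K] [Algebra ℚ K]
    (δ : K → K) (D : DiffPolyC K → DiffPolyC K) (hD : IsDiffStructure δ D) (f : DiffPolyC K)
    (hΔ : deltaC K f ∈
      tensorSub
        ((Ideal.span {g : DiffPolyC K | ∃ i : ℕ, g = D^[i] (detC K)}).restrictScalars K) ⊤ ⊔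
      tensorSub ⊤
        ((Ideal.span {g : DiffPolyC K | ∃ i : ℕ, g = D^[i] (detC K)}).restrictScalars K)) :
    f ∈ Ideal.span {g : DiffPolyC K | ∃ i : ℕ, g = D^[i] (detC K)} := by
  rw [span_iterate_detC hD] at hΔ ⊢
  obtain ⟨N, hN⟩ := exists_X_pow_mul_mem_detIdeal hΔ
  induction N with
  | zero => simpa using hN
  | succ N ih =>
    rw [pow_succ', mul_assoc] at hN
    exact ih (mem_detIdeal_of_X_mul_mem K hN)

/-- If `Δ_C(f) ∈ [det] ⊗ C + C ⊗ [det]`, then `f ∈ [det]`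
(equivalently, the comultiplication induced on `C/[det]` is injective). -/
theorem mem_detIdeal_of_deltaC_mem {K : Type} [Field K] [CharZero K]
    (δ : K → K) (D : DiffPolyC K → DiffPolyC K)
    (hD : IsDiffStructure δ D)
    (f : DiffPolyC K)
    (hΔ : deltaC K f ∈
      tensorSub ((Ideal.span {g : DiffPolyC K | ∃ i : ℕ, g = D^[i] (detC K)}).restrictScalars K) ⊤ ⊔
      tensorSub ⊤ ((Ideal.span {g : DiffPolyC K | ∃ i : ℕ, g = D^[i] (detC K)}).restrictScalars K)) :
    f ∈ Ideal.span {g : DiffPolyC K | ∃ i : ℕ, g = D^[i] (detC K)} :=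
  mem_detIdeal_of_deltaC_mem_general δ D hD f hΔ
end

section
/- Let f ∈ C_{≤d} be such that its degree-d homogeneous component π_d(f) belongs to the differential ideal [det]. Then f ∈ C_{≤d−1} + [det−1]. -/
open MvPolynomial

/-!
The derivation preserves total degree, so every derivative of `det` is homogeneous of degree `2`,
and it differs from the corresponding derivative of `det - 1` by a constant. Write
`π_d(f) = ∑ aᵢ · ∂ⁱ det`. Taking degree-`d` components, each `aᵢ` may be replaced by its component
of degree `d - 2` (zero if `d < 2`); then replacing `∂ⁱ det` by `∂ⁱ (det - 1)` changes
the sum by a polynomial of degree at most `d - 2`.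
-/

section TotalDegree

variable {σ R : Type*} [CommSemiring R]

/-- The polynomials all of whose monomials have total degree `< d`: the paper's `C_{≤d-1}`, with
`C_{≤-1} = 0`. Bounding the support rather than `totalDegree` makes this `0` for `d = 0`. -/
noncomputable def totalDegreeLT (σ R : Type*) [CommSemiring R] (d : ℕ) :
    Submodule R (MvPolynomial σ R) :=
  restrictSupport R {s | s.degree < d}

lemma mem_totalDegreeLT {d : ℕ} {p : MvPolynomial σ R} :
    p ∈ totalDegreeLT σ R d ↔ ∀ s ∈ p.support, s.degree < d :=
  Iff.rfl

lemma totalDegreeLT_le_restrictTotalDegree (d : ℕ) :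
    totalDegreeLT σ R d ≤ restrictTotalDegree σ R (d - 1) :=
  restrictSupport_mono R fun _ hs => Nat.le_sub_one_of_lt hs

lemma mem_totalDegreeLT_of_totalDegree_lt {n : ℕ} {p : MvPolynomial σ R}
    (hp : p.totalDegree < n) : p ∈ totalDegreeLT σ R n :=
  mem_totalDegreeLT.2 fun _ hs => (le_totalDegree hs).trans_lt hp

lemma mul_mem_totalDegreeLT {m n : ℕ} {a p : MvPolynomial σ R} (ha : a.totalDegree ≤ m)
    (hp : p ∈ totalDegreeLT σ R n) : a * p ∈ totalDegreeLT σ R (m + n) := by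
  classical
  refine mem_totalDegreeLT.2 fun u hu => ?_
  obtain ⟨s, hs, t, ht, rfl⟩ := Finset.mem_add.1 (support_mul a p hu)
  rw [map_add]
  exact add_lt_add_of_le_of_lt ((le_totalDegree hs).trans ha) (mem_totalDegreeLT.1 hp t ht)

lemma homogeneousComponent_mul_of_isHomogeneous {n : ℕ} {g : MvPolynomial σ R}
    (hg : g.IsHomogeneous n) (d : ℕ) (a : MvPolynomial σ R) :
    homogeneousComponent d (a * g) =
      if n ≤ d then homogeneousComponent (d - n) a * g else 0 := by
  let : GradedAlgebra (homogeneousSubmodule σ R) := gradedAlgebra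
  simp only [← decomposition.decompose'_apply]
  exact DirectSum.coe_decompose_mul_of_right_mem (homogeneousSubmodule σ R) d hg

end TotalDegree

section HomogeneousGenerators

variable {σ R : Type*} [CommRing R]

lemma sub_homogeneousComponent_mem_totalDegreeLT {d : ℕ} {f : MvPolynomial σ R}
    (hf : f.totalDegree ≤ d) : f - homogeneousComponent d f ∈ totalDegreeLT σ R d := by
  refine mem_totalDegreeLT.2 fun s hs => ?_
  rw [mem_support_iff, coeff_sub, coeff_homogeneousComponent] at hs
  have hsd : s.degree ≠ d := fun h => hs (by rw [if_pos h, sub_self])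
  rw [if_neg hsd, sub_zero] at hs
  exact ((le_totalDegree (mem_support_iff.2 hs)).trans hf).lt_of_ne hsd

lemma homogeneousComponent_mul_mem_totalDegreeLT_sup {n : ℕ} {g h : MvPolynomial σ R}
    {I : Ideal (MvPolynomial σ R)} (hg : g.IsHomogeneous n) (hgh : g - h ∈ totalDegreeLT σ R n)
    (hI : h ∈ I) (d : ℕ) (a : MvPolynomial σ R) :
    homogeneousComponent d (a * g) ∈ totalDegreeLT σ R d ⊔ I.restrictScalars R := by
  rw [homogeneousComponent_mul_of_isHomogeneous hg]
  split_ifs with hnd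
  · set b := homogeneousComponent (d - n) a
    have hlow : b * (g - h) ∈ totalDegreeLT σ R d := by
      simpa only [Nat.sub_add_cancel hnd] using
        mul_mem_totalDegreeLT (homogeneousComponent_isHomogeneous (d - n) a).totalDegree_le hgh
    have hideal : b * h ∈ I.restrictScalars R := I.mul_mem_left b hI
    simpa only [← mul_add, sub_add_cancel] using Submodule.add_mem_sup hlow hideal
  · exact zero_mem _

theorem mem_totalDegreeLT_sup_span_of_homogeneousComponent_mem_span {ι : Type*}
    {g h : ι → MvPolynomial σ R} {n : ι → ℕ} (hg : ∀ i, (g i).IsHomogeneous (n i))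
    (hgh : ∀ i, g i - h i ∈ totalDegreeLT σ R (n i)) {d : ℕ} {f : MvPolynomial σ R}
    (hdeg : f.totalDegree ≤ d) (hf : homogeneousComponent d f ∈ Ideal.span (Set.range g)) :
    f ∈ totalDegreeLT σ R d ⊔ (Ideal.span (Set.range h)).restrictScalars R := by
  set M := totalDegreeLT σ R d ⊔ (Ideal.span (Set.range h)).restrictScalars R
  have hlow : f - homogeneousComponent d f ∈ M :=
    Submodule.mem_sup_left (sub_homogeneousComponent_mem_totalDegreeLT hdeg)
  have htop : homogeneousComponent d f ∈ M := by
    obtain ⟨a, ha⟩ := Finsupp.mem_ideal_span_range_iff_exists_finsupp.1 hf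
    rw [← homogeneousComponent_eq_self (homogeneousComponent_isHomogeneous d f), ← ha,
      Finsupp.sum, map_sum]
    exact M.sum_mem fun i _ => homogeneousComponent_mul_mem_totalDegreeLT_sup (hg i) (hgh i)
      (Ideal.subset_span (Set.mem_range_self i)) d (a i)
  simpa only [sub_add_cancel] using M.add_mem hlow htop

end HomogeneousGenerators

section DifferentialIdeals

variable {σ R : Type*} [CommRing R]

/-- The differential ideal `[p]`, generated by the iterated derivatives of `p` under `D`. -/
def diffIdeal {A : Type*} [Semiring A] (D : A → A) (p : A) : Ideal A :=
  Ideal.span {g | ∃ i : ℕ, g = D^[i] p}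

lemma diffIdeal_eq_span_range {A : Type*} [Semiring A] (D : A → A) (p : A) :
    diffIdeal D p = Ideal.span (Set.range fun i : ℕ => D^[i] p) := by
  simp only [diffIdeal, Set.range, eq_comm]

variable {D : Derivation ℤ (MvPolynomial σ R) (MvPolynomial σ R)}

lemma isHomogeneous_derivation_apply (hC : ∀ a, (D (C a)).IsHomogeneous 0)
    (hX : ∀ v, (D (X v)).IsHomogeneous 1) {n : ℕ} {p : MvPolynomial σ R}
    (hp : p.IsHomogeneous n) : (D p).IsHomogeneous n := by
  have hlinear : ∀ q ∈ homogeneousSubmodule σ R 1, (D q).IsHomogeneous 1 := by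
    intro q hq
    rw [homogeneousSubmodule_one_eq_span_X] at hq
    induction hq using Submodule.span_induction with
    | mem _ hv =>
      obtain ⟨v, rfl⟩ := hv
      exact hX v
    | zero => simpa only [map_zero] using isHomogeneous_zero σ R 1
    | add q r _ _ hq hr => simpa only [map_add] using hq.add hr
    | smul a q hmem hq =>
      rw [← homogeneousSubmodule_one_eq_span_X] at hmem
      rw [smul_eq_C_mul, D.leibniz, smul_eq_mul, smul_eq_mul]
      exact (hq.C_mul a).add (hmem.mul (hC a))
  rw [← mem_homogeneousSubmodule, ← homogeneousSubmodule_one_pow] at hp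
  induction hp using Submodule.pow_induction_on_left' with
  | algebraMap a => exact hC a
  | add q r i _ _ hq hr => simpa only [map_add] using hq.add hr
  | mem_mul l hl i q hq ih =>
    rw [homogeneousSubmodule_one_pow] at hq
    rw [D.leibniz, smul_eq_mul, smul_eq_mul, Nat.succ_eq_one_add]
    refine (hl.mul ih).add ?_
    rw [add_comm]
    exact hq.mul (hlinear l hl)

lemma isHomogeneous_iterate_derivation_apply (hC : ∀ a, (D (C a)).IsHomogeneous 0)
    (hX : ∀ v, (D (X v)).IsHomogeneous 1) {n : ℕ} {p : MvPolynomial σ R}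
    (hp : p.IsHomogeneous n) (i : ℕ) : (D^[i] p).IsHomogeneous n := by
  induction i with
  | zero => exact hp
  | succ i ih =>
    rw [Function.iterate_succ_apply']
    exact isHomogeneous_derivation_apply hC hX ih

theorem mem_totalDegreeLT_sup_diffIdeal_of_homogeneousComponent_mem_diffIdeal
    (hC : ∀ a, (D (C a)).IsHomogeneous 0) (hX : ∀ v, (D (X v)).IsHomogeneous 1)
    {m n : ℕ} (hmn : m < n) {p q : MvPolynomial σ R} (hp : p.IsHomogeneous n)
    (hq : q.IsHomogeneous m) {d : ℕ} {f : MvPolynomial σ R} (hdeg : f.totalDegree ≤ d)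
    (hf : homogeneousComponent d f ∈ diffIdeal D p) :
    f ∈ totalDegreeLT σ R d ⊔ (diffIdeal D (p - q)).restrictScalars R := by
  rw [diffIdeal_eq_span_range] at hf ⊢
  refine mem_totalDegreeLT_sup_span_of_homogeneousComponent_mem_span
    (isHomogeneous_iterate_derivation_apply hC hX hp) (fun i => ?_) hdeg hf
  rw [iterate_map_sub, sub_sub_cancel]
  have hqi := isHomogeneous_iterate_derivation_apply hC hX hq i
  exact mem_totalDegreeLT_of_totalDegree_lt (hqi.totalDegree_le.trans_lt hmn)

end DifferentialIdeals

section Determinant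

variable {K : Type} [CommRing K] {δ : K → K} {D : DiffPolyC K → DiffPolyC K}

lemma isHomogeneous_detC : (detC K).IsHomogeneous 2 :=
  ((isHomogeneous_X K _).mul (isHomogeneous_X K _)).sub
    ((isHomogeneous_X K _).mul (isHomogeneous_X K _))

/-- The derivation of the differential polynomial ring bundled over `ℤ`, since it is not
`K`-linear. -/
noncomputable def IsDiffStructure.derivation (hD : IsDiffStructure δ D) :
    Derivation ℤ (DiffPolyC K) (DiffPolyC K) :=
  Derivation.mk' (AddMonoidHom.mk' D hD.2.2.1).toIntLinearMap fun f g => by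
    rw [smul_eq_mul, smul_eq_mul, add_comm, mul_comm g]
    exact hD.2.2.2.1 f g

lemma IsDiffStructure.coe_derivation (hD : IsDiffStructure δ D) : ⇑hD.derivation = D :=
  rfl

lemma IsDiffStructure.isHomogeneous_derivation_C (hD : IsDiffStructure δ D) (a : K) :
    (hD.derivation (C a)).IsHomogeneous 0 := by
  rw [hD.coe_derivation]
  obtain ⟨-, -, -, -, map_C, -⟩ := hD
  rw [map_C]
  exact isHomogeneous_C DVar (δ a)

lemma IsDiffStructure.isHomogeneous_derivation_X (hD : IsDiffStructure δ D) (v : DVar) :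
    (hD.derivation (X v)).IsHomogeneous 1 := by
  rw [hD.coe_derivation]
  obtain ⟨-, -, -, -, -, map_X⟩ := hD
  rw [map_X]
  exact isHomogeneous_X K (v.1, v.2 + 1)

theorem mem_of_homogeneousComponent_mem_detIdeal_general (hD : IsDiffStructure δ D)
    {d : ℕ} {f : DiffPolyC K} (hdeg : f.totalDegree ≤ d)
    (hf : homogeneousComponent d f ∈ diffIdeal D (detC K)) :
    f ∈ totalDegreeLT DVar K d ⊔ (diffIdeal D (detC K - 1)).restrictScalars K :=
  mem_totalDegreeLT_sup_diffIdeal_of_homogeneousComponent_mem_diffIdeal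
    hD.isHomogeneous_derivation_C hD.isHomogeneous_derivation_X two_pos
    isHomogeneous_detC (isHomogeneous_one DVar K) hdeg hf

end Determinant

/-- If `f ∈ C_{≤d}` and its degree-`d` homogeneous component `π_d(f)` belongs
to the differential ideal `[det]`, then `f ∈ C_{≤d−1} + [det−1]`. -/
theorem mem_of_homogeneousComponent_mem_detIdeal {K : Type} [Field K] [CharZero K]
    (δ : K → K) (D : DiffPolyC K → DiffPolyC K)
    (hD : IsDiffStructure δ D)
    (d : ℕ) (f : DiffPolyC K)
    (hdeg : f.totalDegree ≤ d)
    (hf : homogeneousComponent d f ∈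
      Ideal.span {g : DiffPolyC K | ∃ i : ℕ, g = D^[i] (detC K)}) :
    f ∈ restrictTotalDegree DVar K (d - 1) ⊔
      (Ideal.span {g : DiffPolyC K | ∃ i : ℕ, g = D^[i] (detC K - 1)}).restrictScalars K :=
  SetLike.le_def.1 (sup_le_sup_right (totalDegreeLT_le_restrictTotalDegree d) _)
    (mem_of_homogeneousComponent_mem_detIdeal_general hD hdeg hf)
end

section
/- Let h ∈ P be a term (a nonzero scalar multiple of a monomial) with wt(h) > 0, and let a ∈ K with a ≠ 0 and ∂a ≠ 0. Then the element τ_a(h) − a^{d(h)}·h of P is nonzero and has weight exactly wt(h) − 1. -/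
open MvPolynomial

/-- Variables of the differential polynomial ring `P = K{x,y}`: the variable `(0, n)`
represents `x^{(n)}` and `(1, n)` represents `y^{(n)}`. -/
abbrev PVar : Type := Fin 2 × ℕ

/-- The differential polynomial ring `P = K{x,y}`. -/
abbrev DiffPolyP (K : Type) [CommRing K] : Type := MvPolynomial PVar K

/-- `D : P → P` is the unique derivation extending the derivation `δ` of `K` and shifting
variables, i.e. `D(x^{(n)}) = x^{(n+1)}` and `D(y^{(n)}) = y^{(n+1)}`. -/
def IsDiffStructureP {K : Type} [CommRing K] (δ : K → K)
    (D : DiffPolyP K → DiffPolyP K) : Prop :=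
  (∀ a b : K, δ (a + b) = δ a + δ b) ∧
  (∀ a b : K, δ (a * b) = δ a * b + a * δ b) ∧
  (∀ f g : DiffPolyP K, D (f + g) = D f + D g) ∧
  (∀ f g : DiffPolyP K, D (f * g) = D f * g + f * D g) ∧
  (∀ a : K, D (C a) = C (δ a)) ∧
  (∀ v : PVar, D (X v) = X (v.1, v.2 + 1))

/-- The weight of a monomial (given by its exponents `m`):
`wt(∏ (x^{(p)})^{m_p} · ∏ (y^{(q)})^{n_q}) = Σ p·m_p + Σ q·n_q`. -/
def wdeg (m : PVar →₀ ℕ) : ℕ := m.sum fun v k => v.2 * k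

/-- The weight of a differential polynomial: the maximum weight of a monomial occurring
in it (with nonzero coefficient); `wt 0 = 0`. -/
noncomputable def wt {K : Type} [CommRing K] (f : DiffPolyP K) : ℕ := f.support.sup wdeg

/-- `d(h) = Σ_p m_p − Σ_q n_q` for a monomial with exponents `m`. -/
def dExp (m : PVar →₀ ℕ) : ℤ := m.sum fun v k => if v.1 = 0 then (k : ℤ) else -(k : ℤ)

/-- `τ_b : P → P`, the unique `K`-algebra homomorphism with `τ_b(x^{(p)}) = D^p(b·x)` and
`τ_b(y^{(q)}) = D^q(b⁻¹·y)` (the action of the diagonal torus element `diag(b, b⁻¹)`). -/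
noncomputable def tauP {K : Type} [Field K] (D : DiffPolyP K → DiffPolyP K) (b : K) :
    DiffPolyP K →ₐ[K] DiffPolyP K :=
  aeval fun v : PVar =>
    D^[v.2] (C (if v.1 = 0 then b else b⁻¹) * X (v.1, (0 : ℕ)))

/-- `σ_g : P → P` for `g = [[a, b], [c, e]]`: the unique `K`-algebra homomorphism with
`σ_g(x^{(p)}) = D^p(a·x + c·y)` and `σ_g(y^{(q)}) = D^q(b·x + e·y)`. -/
noncomputable def sigmaP {K : Type} [Field K] (D : DiffPolyP K → DiffPolyP K)
    (a b c e : K) : DiffPolyP K →ₐ[K] DiffPolyP K :=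
  aeval fun v : PVar =>
    D^[v.2] (if v.1 = 0
      then C a * X ((0 : Fin 2), (0 : ℕ)) + C c * X ((1 : Fin 2), (0 : ℕ))
      else C b * X ((0 : Fin 2), (0 : ℕ)) + C e * X ((1 : Fin 2), (0 : ℕ)))

/-- The Wronskian `x'y − xy'`. -/
noncomputable def wronsk (K : Type) [Field K] : DiffPolyP K :=
  X ((0 : Fin 2), (1 : ℕ)) * X ((1 : Fin 2), (0 : ℕ))
    - X ((0 : Fin 2), (0 : ℕ)) * X ((1 : Fin 2), (1 : ℕ))

/-- `P_m^0 = span_K {x^m, x^{m−1}y, …, y^m}`. -/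
noncomputable def P0 (K : Type) [Field K] (m : ℕ) : Submodule K (DiffPolyP K) :=
  Submodule.span K {f : DiffPolyP K | ∃ i : ℕ, i ≤ m ∧
    f = X ((0 : Fin 2), (0 : ℕ)) ^ i * X ((1 : Fin 2), (0 : ℕ)) ^ (m - i)}

/-- `P_d^1`: the `K`-span of all monomials of degree `d` and weight at most `1`. -/
noncomputable def P1 (K : Type) [Field K] (d : ℕ) : Submodule K (DiffPolyP K) :=
  Submodule.span K {f : DiffPolyP K | ∃ m : PVar →₀ ℕ,
    (m.sum fun _ k => k) = d ∧ wdeg m ≤ 1 ∧ f = monomial m (1 : K)}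

/-- `U_d = span_K {x^i y^{d−i}, D(x^i y^{d−i}) : 0 ≤ i ≤ d}`. -/
noncomputable def Ud (K : Type) [Field K] (D : DiffPolyP K → DiffPolyP K) (d : ℕ) :
    Submodule K (DiffPolyP K) :=
  Submodule.span K {f : DiffPolyP K | ∃ i : ℕ, i ≤ d ∧
    (f = X ((0 : Fin 2), (0 : ℕ)) ^ i * X ((1 : Fin 2), (0 : ℕ)) ^ (d - i) ∨
     f = D (X ((0 : Fin 2), (0 : ℕ)) ^ i * X ((1 : Fin 2), (0 : ℕ)) ^ (d - i)))}

/-- `W_d = P_d^0 + (x'y − xy')·P_{d−2}^0`. -/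
noncomputable def Wd (K : Type) [Field K] (d : ℕ) : Submodule K (DiffPolyP K) :=
  P0 K d ⊔ Submodule.map (LinearMap.mulLeft K (wronsk K)) (P0 K (d - 2))

/-!
Modulo terms whose weight is lower by at least two, Leibniz' rule gives
`τ_a(x^{(p)}) ≡ a·x^{(p)} + p·∂a·x^{(p-1)}` and `τ_a(y^{(q)}) ≡ a⁻¹·y^{(q)} - q·a⁻²·∂a·y^{(q-1)}`,
that is, `τ_a(v) ≡ a^{d(v)}·(v + (∂a/a)·Λ v)` for every variable `v`, where `Λ` is the
`K`-linear derivation `x^{(p)} ↦ p·x^{(p-1)}`, `y^{(q)} ↦ -q·y^{(q-1)}`. Such expansions multiply,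
so the same formula holds for every monomial `m`. Finally `Λ m` has a monomial of weight exactly
`wt(m) - 1`: if `v` has positive order and occurs in `m`, the monomial `m·(Λ v)/v` arises
in `Λ m` from no other variable, because in all other contributions the exponent of `v` has not
dropped.
-/

section WeightFiltration

variable {σ R M : Type*} [CommSemiring R] [AddCommMonoid M] [Preorder M]

/-- The weight filtration of a polynomial ring: the submodule of polynomials all of whose
monomials have `w`-weight at most `n`. Weights may be negative, so that over `ℤ` the step `n - 2`
is never truncated. -/
noncomputable def weightLE (R : Type*) [CommSemiring R] (w : σ → M) (n : M) :
    Submodule R (MvPolynomial σ R) :=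
  restrictSupport R {s | Finsupp.weight w s ≤ n}

variable {w : σ → M} {n p : M} {f g : MvPolynomial σ R}

lemma weight_le_of_mem_weightLE (hf : f ∈ weightLE R w n) {s : σ →₀ ℕ} (hs : coeff s f ≠ 0) :
    Finsupp.weight w s ≤ n :=
  (mem_restrictSupport_iff R).mp hf (mem_support_iff.mpr hs)

lemma weightLE_mono (h : n ≤ p) : weightLE R w n ≤ weightLE R w p :=
  restrictSupport_mono R fun _ hs => le_trans hs h

lemma X_mem_weightLE {i : σ} (h : w i ≤ n) : (X i : MvPolynomial σ R) ∈ weightLE R w n :=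
  (monomial_mem_restrictSupport R).mpr <| Or.inl <| by
    simpa only [Set.mem_ofPred_eq, Finsupp.weight_single, one_smul] using h

lemma one_mem_weightLE_zero : (1 : MvPolynomial σ R) ∈ weightLE R w 0 :=
  (monomial_mem_restrictSupport R).mpr <| Or.inl (map_zero (Finsupp.weight w)).le

lemma C_mul_mem_weightLE (c : R) (hf : f ∈ weightLE R w n) : C c * f ∈ weightLE R w n := by
  rw [C_mul']
  exact Submodule.smul_mem _ c hf

lemma mul_mem_weightLE [IsOrderedAddMonoid M] (hf : f ∈ weightLE R w n)
    (hg : g ∈ weightLE R w p) : f * g ∈ weightLE R w (n + p) := by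
  have hfg := Submodule.mul_mem_mul hf hg
  rw [weightLE, weightLE, ← restrictSupport_add] at hfg
  refine restrictSupport_mono R (Set.add_subset_iff.mpr fun s hs t ht => ?_) hfg
  rw [Set.mem_ofPred_eq, map_add]
  exact add_le_add hs ht

end WeightFiltration

section FirstOrderExpansion

variable {σ R : Type*} [CommRing R] {w : σ → ℤ} {n p : ℤ} {u u' f f' g g' : MvPolynomial σ R}

/-- `u = f + f' +` (terms of weight at most `n - 2`), where `f` has weight at most `n` and `f'`
has weight at most `n - 1`. -/
structure IsFirstOrderExpansion (w : σ → ℤ) (n : ℤ) (u f f' : MvPolynomial σ R) : Prop where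
  lead_mem : f ∈ weightLE R w n
  next_mem : f' ∈ weightLE R w (n - 1)
  remainder_mem : u - (f + f') ∈ weightLE R w (n - 2)

namespace IsFirstOrderExpansion

lemma lead_add_next_mem (h : IsFirstOrderExpansion w n u f f') : f + f' ∈ weightLE R w n :=
  add_mem h.lead_mem (weightLE_mono (by lia) h.next_mem)

lemma mem (h : IsFirstOrderExpansion w n u f f') : u ∈ weightLE R w n :=
  (Submodule.sub_mem_iff_left _ h.lead_add_next_mem).mp
    (weightLE_mono (by lia) h.remainder_mem)

lemma sub_lead_mem (h : IsFirstOrderExpansion w n u f f') : u - f ∈ weightLE R w (n - 1) := by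
  have hsum := add_mem (weightLE_mono (by lia) h.remainder_mem) h.next_mem
  rwa [sub_add_eq_sub_sub, sub_add_cancel] at hsum

lemma coeff_sub_lead (h : IsFirstOrderExpansion w n u f f') {t : σ →₀ ℕ}
    (ht : n - 2 < Finsupp.weight w t) : coeff t (u - f) = coeff t f' := by
  have hrem : coeff t (u - (f + f')) = 0 := by
    by_contra hne
    exact ht.not_ge (weight_le_of_mem_weightLE h.remainder_mem hne)
  rwa [← sub_sub, coeff_sub, sub_eq_zero] at hrem

lemma one : IsFirstOrderExpansion w 0 (1 : MvPolynomial σ R) 1 0 where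
  lead_mem := one_mem_weightLE_zero
  next_mem := zero_mem _
  remainder_mem := by simp

lemma C_mul (c : R) (h : IsFirstOrderExpansion w n u f f') :
    IsFirstOrderExpansion w n (C c * u) (C c * f) (C c * f') where
  lead_mem := C_mul_mem_weightLE c h.lead_mem
  next_mem := C_mul_mem_weightLE c h.next_mem
  remainder_mem := by
    rw [← mul_add, ← mul_sub]
    exact C_mul_mem_weightLE c h.remainder_mem

lemma mul (h : IsFirstOrderExpansion w n u f f') (k : IsFirstOrderExpansion w p u' g g') :
    IsFirstOrderExpansion w (n + p) (u * u') (f * g) (f * g' + g * f') where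
  lead_mem := mul_mem_weightLE h.lead_mem k.lead_mem
  next_mem := add_mem (weightLE_mono (by lia) (mul_mem_weightLE h.lead_mem k.next_mem))
    (weightLE_mono (by lia) (mul_mem_weightLE k.lead_mem h.next_mem))
  remainder_mem := by
    have hsplit : u * u' - (f * g + (f * g' + g * f')) =
        (u - (f + f')) * u' + (f + f') * (u' - (g + g')) + f' * g' := by ring
    rw [hsplit]
    exact add_mem (add_mem
      (weightLE_mono (by lia) (mul_mem_weightLE h.remainder_mem k.mem))
      (weightLE_mono (by lia) (mul_mem_weightLE h.lead_add_next_mem k.remainder_mem)))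
      (weightLE_mono (by lia) (mul_mem_weightLE h.next_mem k.next_mem))

lemma map_mul {φ : MvPolynomial σ R →ₐ[R] MvPolynomial σ R}
    {E : Derivation R (MvPolynomial σ R) (MvPolynomial σ R)} {b c : R}
    (hf : IsFirstOrderExpansion w n (φ f) (C b * f) (C b * E f))
    (hg : IsFirstOrderExpansion w p (φ g) (C c * g) (C c * E g)) :
    IsFirstOrderExpansion w (n + p) (φ (f * g)) (C (b * c) * (f * g))
      (C (b * c) * E (f * g)) := by
  convert hf.mul hg using 1
  · exact _root_.map_mul φ f g
  · rw [C.map_mul]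
    ring
  · rw [C.map_mul, E.leibniz, smul_eq_mul, smul_eq_mul]
    ring

lemma map_monomial {φ : MvPolynomial σ R →ₐ[R] MvPolynomial σ R} {c : σ → R}
    {E : Derivation R (MvPolynomial σ R) (MvPolynomial σ R)}
    (hX : ∀ i, IsFirstOrderExpansion w (w i) (φ (X i)) (C (c i) * X i) (C (c i) * E (X i)))
    (m : σ →₀ ℕ) :
    IsFirstOrderExpansion w (Finsupp.weight w m) (φ (monomial m 1))
      (C (m.prod fun i k => c i ^ k) * monomial m 1)
      (C (m.prod fun i k => c i ^ k) * E (monomial m 1)) := by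
  induction m using Finsupp.induction_linear with
  | zero => simpa using one (w := w) (R := R)
  | add s t hs ht =>
    rw [_root_.map_add (Finsupp.weight w),
      Finsupp.prod_add_index' (fun i => pow_zero (c i)) (fun i => pow_add (c i)),
      ← one_mul (1 : R), ← monomial_mul]
    exact hs.map_mul ht
  | single i k =>
    induction k with
    | zero => simpa using one (w := w) (R := R)
    | succ k ih =>
      simpa only [X, monomial_mul, one_mul, ← Finsupp.single_add, Finsupp.weight_single,
        Finsupp.prod_single_index, pow_zero, pow_succ, succ_nsmul] using ih.map_mul (hX i)

end IsFirstOrderExpansion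

end FirstOrderExpansion

lemma exists_derivation_coe_eq {A : Type*} [CommRing A] (f : A → A)
    (hadd : ∀ a b, f (a + b) = f a + f b) (hmul : ∀ a b, f (a * b) = f a * b + a * f b) :
    ∃ d : Derivation ℤ A A, ⇑d = f :=
  ⟨Derivation.mk' (AddMonoidHom.mk' f hadd).toIntLinearMap fun a b => by
    simp only [AddMonoidHom.coe_toIntLinearMap, AddMonoidHom.mk'_apply, hmul, smul_eq_mul]
    ring, rfl⟩

lemma derivation_iterate_mul {S A : Type*} [CommSemiring S] [CommSemiring A] [Algebra S A]
    (D : Derivation S A A) (x y : A) (n : ℕ) :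
    D^[n] (x * y) =
      ∑ ij ∈ Finset.HasAntidiagonal.antidiagonal n, n.choose ij.1 • (D^[ij.1] x * D^[ij.2] y) := by
  induction n with
  | zero => simp
  | succ n ih =>
    rw [Finset.sum_antidiagonal_choose_succ_nsmul (fun i j => D^[i] x * D^[j] y),
      Function.iterate_succ_apply', ih, map_sum, ← Finset.sum_add_distrib]
    refine Finset.sum_congr rfl fun ij hij => ?_
    rw [Nat.choose_symm_of_eq_add (Finset.HasAntidiagonal.mem_antidiagonal.mp hij).symm,
      ← nsmul_add, map_nsmul, D.leibniz, Function.iterate_succ_apply',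
      Function.iterate_succ_apply', smul_eq_mul, smul_eq_mul, mul_comm (D^[ij.2] y)]

lemma derivation_zpow {S F : Type*} [CommRing S] [Field F] [Algebra S F] (d : Derivation S F F)
    {a : F} (ha : a ≠ 0) (n : ℤ) : d (a ^ n) = a ^ n * (n * (d a / a)) := by
  rw [d.leibniz_zpow, zpow_sub_one₀ ha, zsmul_eq_mul, smul_eq_mul]
  field_simp

lemma coeff_mkDerivation_monomial {σ R : Type*} [CommSemiring R] (k : σ → R) {s : σ → σ} {v : σ}
    (hsv : s v ≠ v) {m : σ →₀ ℕ} (hv : m v ≠ 0) :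
    coeff (m - Finsupp.single v 1 + Finsupp.single (s v) 1)
      (mkDerivation R (fun i => C (k i) * X (s i)) (monomial m 1)) = m v * k v := by
  have hne {i : σ} (hi : i ≠ v) : m - Finsupp.single i 1 + Finsupp.single (s i) 1 ≠
      m - Finsupp.single v 1 + Finsupp.single (s v) 1 := fun h => by
    have hexp := DFunLike.congr_fun h v
    simp only [Finsupp.add_apply, Finsupp.tsub_apply, Finsupp.single_eq_of_ne hi.symm,
      Finsupp.single_eq_of_ne hsv.symm, Finsupp.single_eq_same] at hexp
    lia
  classical
  rw [mkDerivation_monomial, one_smul, Finsupp.sum, coeff_sum,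
    Finset.sum_eq_single_of_mem v (Finsupp.mem_support_iff.mpr hv)]
  · rw [smul_eq_mul, C_mul_X_eq_monomial, monomial_mul, coeff_monomial, if_pos rfl]
  · intro i _ hi
    rw [smul_eq_mul, C_mul_X_eq_monomial, monomial_mul, coeff_monomial, if_neg (hne hi)]

/-- The order of a variable, `x^{(n)} ↦ n` and `y^{(n)} ↦ n`, as an integer weight. -/
def varOrder (v : PVar) : ℤ := v.2

/-- The exponent of `b` in `τ_b`: the torus element `diag(b, b⁻¹)` scales `x` by `b ^ 1` and `y`
by `b ^ (-1)`. -/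
def torusWeight (i : Fin 2) : ℤ := if i = 0 then 1 else -1

/-- The next lower derivative of a variable; variables of order `0` are fixed. -/
def lowerVar (v : PVar) : PVar := (v.1, v.2 - 1)

lemma natCast_wdeg (m : PVar →₀ ℕ) : (wdeg m : ℤ) = Finsupp.weight varOrder m := by
  simp [wdeg, Finsupp.weight_apply, Finsupp.sum, varOrder, mul_comm]

lemma zpow_torusWeight {G : Type*} [DivInvMonoid G] (a : G) (i : Fin 2) :
    a ^ torusWeight i = if i = 0 then a else a⁻¹ := by
  unfold torusWeight
  split_ifs
  · exact zpow_one a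
  · exact zpow_neg_one a

lemma zpow_dExp {G : Type*} [CommGroupWithZero G] {a : G} (ha : a ≠ 0) (m : PVar →₀ ℕ) :
    a ^ dExp m = m.prod fun v k => (a ^ torusWeight v.1) ^ k := by
  have hd : dExp m = ∑ v ∈ m.support, torusWeight v.1 * m v := by
    simp only [dExp, torusWeight, Finsupp.sum, ite_mul, one_mul, neg_one_mul]
  simp only [hd, Finsupp.prod]
  induction m.support using Finset.cons_induction with
  | empty => simp
  | cons v s _ ih =>
    rw [Finset.sum_cons, Finset.prod_cons, zpow_add₀ ha, ih, zpow_mul, zpow_natCast]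

lemma exists_order_ne_zero {m : PVar →₀ ℕ} (h : 0 < wdeg m) : ∃ v, m v ≠ 0 ∧ v.2 ≠ 0 := by
  obtain ⟨v, -, hvm⟩ := Finset.exists_ne_zero_of_sum_ne_zero h.ne'
  exact ⟨v, right_ne_zero_of_mul hvm, left_ne_zero_of_mul hvm⟩

lemma varOrder_lowerVar {v : PVar} (hv0 : v.2 ≠ 0) : varOrder (lowerVar v) = varOrder v - 1 :=
  Nat.cast_pred (Nat.pos_of_ne_zero hv0)

lemma natCast_wdeg_sub_single_add_single_lowerVar {m : PVar →₀ ℕ} {v : PVar} (hv : m v ≠ 0)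
    (hv0 : v.2 ≠ 0) :
    (wdeg (m - Finsupp.single v 1 + Finsupp.single (lowerVar v) 1) : ℤ) = wdeg m - 1 := by
  rw [natCast_wdeg, natCast_wdeg, map_add, Finsupp.weight_single, one_smul, varOrder_lowerVar hv0,
    ← Finsupp.weight_sub_single_add hv, add_sub_assoc]

lemma wt_eq_of_mem_weightLE {K : Type} [CommRing K] {f : DiffPolyP K} {t : PVar →₀ ℕ}
    (hf : f ∈ weightLE K varOrder (wdeg t)) (ht : coeff t f ≠ 0) : wt f = wdeg t := by
  refine le_antisymm (Finset.sup_le fun s hs => ?_) (Finset.le_sup (mem_support_iff.mpr ht))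
  have hle := weight_le_of_mem_weightLE hf (mem_support_iff.mp hs)
  rwa [← natCast_wdeg, Nat.cast_le] at hle

/-- The derivation `Λ` with `Λ x^{(p)} = p·x^{(p-1)}` and `Λ y^{(q)} = -q·y^{(q-1)}`, which gives
the part of `τ_a` lowering the weight by one. -/
noncomputable def lowering (K : Type) [CommRing K] :
    Derivation K (DiffPolyP K) (DiffPolyP K) :=
  mkDerivation K fun v => C (v.2 * torusWeight v.1 : K) * X (lowerVar v)

section IteratedDerivatives

variable {K : Type} [CommRing K] {δ : Derivation ℤ K K}
  {D : Derivation ℤ (DiffPolyP K) (DiffPolyP K)}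

lemma iterate_apply_X (hX : ∀ v : PVar, D (X v) = X (v.1, v.2 + 1)) (i : Fin 2) (p : ℕ) :
    D^[p] (X (i, 0)) = X (i, p) := by
  induction p with
  | zero => rfl
  | succ p ih => rw [Function.iterate_succ_apply', ih, hX]

lemma iterate_apply_C (hC : ∀ c, D (C c) = C (δ c)) (c : K) (p : ℕ) : D^[p] (C c) = C (δ^[p] c) :=
  (Function.Semiconj.iterate_right (fun b => (hC b).symm) p c).symm

lemma isFirstOrderExpansion_iterate (hC : ∀ c, D (C c) = C (δ c))
    (hX : ∀ v : PVar, D (X v) = X (v.1, v.2 + 1)) (c : K) (i : Fin 2) (p : ℕ) :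
    IsFirstOrderExpansion varOrder p (D^[p] (C c * X (i, 0))) (C c * X (i, p))
      (C (p * δ c) * X (i, p - 1)) := by
  refine ⟨C_mul_mem_weightLE c (X_mem_weightLE le_rfl), ?_, ?_⟩
  · cases p with
    | zero => simp
    | succ p => exact C_mul_mem_weightLE _ (X_mem_weightLE (by simp [varOrder]))
  · rw [derivation_iterate_mul, Finset.Nat.sum_antidiagonal_eq_sum_range_succ_mk]
    simp only [iterate_apply_C hC, iterate_apply_X hX]
    cases p with
    | zero => simp
    | succ p =>
      have hsplit : ∑ k ∈ Finset.range (p + 1 + 1),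
            (p + 1).choose k • (C (δ^[k] c) * X (i, p + 1 - k) : DiffPolyP K) -
            (C c * X (i, p + 1) + C (↑(p + 1) * δ c) * X (i, p + 1 - 1)) =
          ∑ k ∈ Finset.range p,
            (p + 1).choose (k + 2) • (C (δ^[k + 2] c) * X (i, p + 1 - (k + 2))) := by
        rw [Finset.sum_range_succ', Finset.sum_range_succ']
        simp only [Function.iterate_succ_apply, Function.iterate_zero_apply, zero_add,
          Nat.choose_zero_right, Nat.choose_one_right, Nat.sub_zero, nsmul_eq_mul, C_mul,
          map_natCast]
        ring
      rw [hsplit]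
      refine sum_mem fun k hk => nsmul_mem (C_mul_mem_weightLE _ (X_mem_weightLE ?_)) _
      have hkp := Finset.mem_range.mp hk
      simp only [varOrder]
      lia

end IteratedDerivatives

section TorusAction

variable {K : Type} [Field K] {δ : Derivation ℤ K K}
  {D : Derivation ℤ (DiffPolyP K) (DiffPolyP K)}

lemma isFirstOrderExpansion_tauP_X (hC : ∀ c, D (C c) = C (δ c))
    (hX : ∀ v : PVar, D (X v) = X (v.1, v.2 + 1)) {a : K} (ha : a ≠ 0) (v : PVar) :
    IsFirstOrderExpansion varOrder (varOrder v) (tauP D a (X v)) (C (a ^ torusWeight v.1) * X v)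
      (C (a ^ torusWeight v.1) * ((δ a / a) • lowering K) (X v)) := by
  convert isFirstOrderExpansion_iterate hC hX (a ^ torusWeight v.1) v.1 v.2 using 1
  · rfl
  · rw [tauP, aeval_X, zpow_torusWeight]
  · rw [derivation_zpow δ ha, Derivation.smul_apply, lowering, mkDerivation_X, lowerVar,
      smul_eq_C_mul, ← mul_assoc, ← mul_assoc, ← C_mul, ← C_mul]
    congr 2
    ring

lemma isFirstOrderExpansion_tauP_monomial (hC : ∀ c, D (C c) = C (δ c))
    (hX : ∀ v : PVar, D (X v) = X (v.1, v.2 + 1)) {a : K} (ha : a ≠ 0) (m : PVar →₀ ℕ) (α : K) :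
    IsFirstOrderExpansion varOrder (wdeg m) (tauP D a (monomial m α))
      (C (a ^ dExp m) * monomial m α)
      (C (α * a ^ dExp m * (δ a / a)) * lowering K (monomial m 1)) := by
  have h := (IsFirstOrderExpansion.map_monomial
    (isFirstOrderExpansion_tauP_X hC hX ha) m).C_mul α
  rw [← zpow_dExp ha, ← natCast_wdeg] at h
  have hα : (monomial m α : DiffPolyP K) = C α * monomial m 1 := by rw [C_mul_monomial, mul_one]
  convert h using 1
  · rw [hα, map_mul, algHom_C, algebraMap_eq]
  · rw [hα, mul_left_comm]
  · rw [Derivation.smul_apply, smul_eq_C_mul, C_mul, C_mul]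
    ring

lemma coeff_lowering_monomial_ne_zero [CharZero K] {m : PVar →₀ ℕ} {v : PVar}
    (hv : m v ≠ 0) (hv0 : v.2 ≠ 0) :
    coeff (m - Finsupp.single v 1 + Finsupp.single (lowerVar v) 1)
      (lowering K (monomial m 1)) ≠ 0 := by
  have hne : lowerVar v ≠ v := fun h => by
    have horder := varOrder_lowerVar hv0
    rw [h] at horder
    lia
  have hsign : torusWeight v.1 ≠ 0 := by
    unfold torusWeight
    split_ifs <;> decide
  rw [lowering, coeff_mkDerivation_monomial _ hne hv]
  exact mul_ne_zero (Nat.cast_ne_zero.mpr hv)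
    (mul_ne_zero (Nat.cast_ne_zero.mpr hv0) (Int.cast_ne_zero.mpr hsign))

end TorusAction

/-- For a term `h = α·(monomial with exponents m)` of positive weight and
`a ∈ K` with `a ≠ 0`, `δa ≠ 0`, the element `τ_a(h) − a^{d(h)}·h` is nonzero and has weight
exactly `wt(h) − 1`. -/
theorem wt_tau_sub_smul {K : Type} [Field K] [CharZero K]
    (δ : K → K) (D : DiffPolyP K → DiffPolyP K)
    (hD : IsDiffStructureP δ D)
    (m : PVar →₀ ℕ) (α : K) (hα : α ≠ 0)
    (hwt : 0 < wdeg m)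
    (a : K) (ha : a ≠ 0) (ha' : δ a ≠ 0) :
    tauP D a (monomial m α) - C (a ^ dExp m) * monomial m α ≠ 0 ∧
    wt (tauP D a (monomial m α) - C (a ^ dExp m) * monomial m α) = wdeg m - 1 := by
  obtain ⟨hδ_add, hδ_mul, hD_add, hD_mul, hC, hX⟩ := hD
  obtain ⟨δ, rfl⟩ := exists_derivation_coe_eq δ hδ_add hδ_mul
  obtain ⟨D, rfl⟩ := exists_derivation_coe_eq D hD_add hD_mul
  have hτ := isFirstOrderExpansion_tauP_monomial hC hX ha m α
  obtain ⟨v, hv, hv0⟩ := exists_order_ne_zero hwt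
  let t := m - Finsupp.single v 1 + Finsupp.single (lowerVar v) 1
  have ht : (wdeg t : ℤ) = wdeg m - 1 := natCast_wdeg_sub_single_add_single_lowerVar hv hv0
  have hcoeff : coeff t (tauP D a (monomial m α) - C (a ^ dExp m) * monomial m α) ≠ 0 := by
    refine ne_of_eq_of_ne (hτ.coeff_sub_lead (by rw [← natCast_wdeg]; lia)) ?_
    rw [coeff_C_mul]
    exact mul_ne_zero (mul_ne_zero (mul_ne_zero hα (zpow_ne_zero _ ha)) (div_ne_zero ha' ha))
      (coeff_lowering_monomial_ne_zero hv hv0)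
  have hwt_eq := wt_eq_of_mem_weightLE (ht ▸ hτ.sub_lead_mem) hcoeff
  exact ⟨ne_zero_iff.mpr ⟨t, hcoeff⟩, by lia⟩
end

section
/- Let F be an infinite field and let f ∈ F[x, y, x₁, y₁] be a polynomial that does not belong to the ideal generated by x·y₁ − y·x₁. Then there exists β ∈ F such that the polynomial f(x, y, β·x, β·y) ∈ F[x, y], obtained by substituting x₁ ↦ β·x and y₁ ↦ β·y, is nonzero. -/
open MvPolynomial

/-!
The ideal generated by `x·y₁ - y·x₁` is the kernel of the substitution
`(x, y, x₁, y₁) ↦ (x, y, t·x, t·y)`. Indeed, that substitution sends monomials to monomials, so its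
kernel is spanned by differences of monomials with equal image, and any two such monomials are
related by exchanging factors `x·y₁` for factors `y·x₁`. Hence `f` has nonzero image in
`F[t, x, y]`, and some specialization `t = β` keeps it nonzero because `F` is infinite.
-/

theorem ker_le_ker_of_factorsThrough {R M N P ι κ : Type*} [Semiring R]
    [AddCommMonoid M] [AddCommMonoid N] [AddCommMonoid P] [Module R M] [Module R N] [Module R P]
    (e : Module.Basis ι R M) {b : κ → N} (hb : LinearIndependent R b) {g : ι → κ}
    {φ : M →ₗ[R] N} (hφ : ∀ i, φ (e i) = b (g i))
    {ψ : M →ₗ[R] P} (hψ : Function.FactorsThrough (ψ ∘ e) g) :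
    LinearMap.ker φ ≤ LinearMap.ker ψ := by
  intro v hv
  rw [LinearMap.mem_ker] at hv ⊢
  have hφe : φ ∘ e = b ∘ g := funext hφ
  have fiber_sums_eq_zero : (e.repr v).mapDomain g = 0 := by
    apply hb
    rw [Finsupp.linearCombination_mapDomain, ← hφe, ← Finsupp.apply_linearCombination,
      e.linearCombination_repr, hv, map_zero]
  have hψe : Function.extend g (ψ ∘ e) 0 ∘ g = ψ ∘ e := hψ.extend_comp _
  rw [← e.linearCombination_repr v, Finsupp.apply_linearCombination, ← hψe,
    ← Finsupp.linearCombination_mapDomain, fiber_sums_eq_zero, map_zero]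

theorem pow_mul_pow_eq_of_mul_eq_mul {M : Type*} [CommMonoid M] {x y z w : M}
    (h : x * w = y * z) {a b c d a' b' c' d' : ℕ}
    (hac : a + c = a' + c') (hbd : b + d = b' + d') (hcd : c + d = c' + d') :
    x ^ a * y ^ b * z ^ c * w ^ d = x ^ a' * y ^ b' * z ^ c' * w ^ d' := by
  wlog hle : a ≤ a' generalizing a b c d a' b' c' d'
  · exact (this hac.symm hbd.symm hcd.symm (le_of_not_ge hle)).symm
  obtain ⟨k, rfl⟩ := Nat.exists_eq_add_of_le hle
  obtain rfl : c = c' + k := by lia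
  obtain rfl : d' = d + k := by lia
  obtain rfl : b = b' + k := by lia
  calc x ^ a * y ^ (b' + k) * z ^ (c' + k) * w ^ d
      = x ^ a * y ^ b' * z ^ c' * w ^ d * (y * z) ^ k := by
        simp only [pow_add, mul_pow]; ac_rfl
    _ = x ^ a * y ^ b' * z ^ c' * w ^ d * (x * w) ^ k := by rw [h]
    _ = x ^ (a + k) * y ^ b' * z ^ c' * w ^ (d + k) := by
        simp only [pow_add, mul_pow]; ac_rfl

section RankOne

variable {R : Type*}

/-- The substitution `(x, y, x₁, y₁) ↦ (x, y, t·x, t·y)`, which parametrizes the `2 × 2` matrices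
with proportional rows. The parameter `t` is the variable `0` of the target, and `x`, `y` are the
variables `1`, `2`. -/
noncomputable def rankOneParam (R : Type*) [CommSemiring R] :
    MvPolynomial (Fin 4) R →ₐ[R] MvPolynomial (Fin 3) R :=
  aeval ![X 1, X 2, X 0 * X 1, X 0 * X 2]

/-- The action of `rankOneParam` on exponents of monomials. -/
noncomputable def rankOneExponent (m : Fin 4 →₀ ℕ) : Fin 3 →₀ ℕ :=
  Finsupp.equivFunOnFinite.symm ![m 2 + m 3, m 0 + m 2, m 1 + m 3]

theorem aeval_monomial_one_fin_four {A : Type*} [CommSemiring R] [CommSemiring A] [Algebra R A]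
    (p : Fin 4 → A) (m : Fin 4 →₀ ℕ) :
    aeval p (monomial m (1 : R)) = p 0 ^ m 0 * p 1 ^ m 1 * p 2 ^ m 2 * p 3 ^ m 3 := by
  rw [aeval_monomial, map_one, one_mul, Finsupp.prod_fintype _ _ fun _ => pow_zero _,
    Fin.prod_univ_four]

theorem rankOneParam_monomial_one [CommSemiring R] (m : Fin 4 →₀ ℕ) :
    rankOneParam R (monomial m 1) = monomial (rankOneExponent m) 1 := by
  rw [rankOneParam, aeval_monomial_one_fin_four, monomial_eq, C_1, one_mul,
    Finsupp.prod_fintype _ _ fun _ => pow_zero _, Fin.prod_univ_three]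
  simp only [rankOneExponent, Finsupp.equivFunOnFinite_symm_apply_apply, Matrix.cons_val]
  ring

theorem aeval_monomial_one_factorsThrough_rankOneExponent {A : Type*} [CommSemiring R]
    [CommSemiring A] [Algebra R A] {p : Fin 4 → A} (hp : p 0 * p 3 = p 1 * p 2) :
    Function.FactorsThrough (fun m => aeval p (monomial m (1 : R))) rankOneExponent := by
  intro m m' hm
  have coord (i : Fin 3) := DFunLike.congr_fun hm i
  simp only [aeval_monomial_one_fin_four]
  exact pow_mul_pow_eq_of_mul_eq_mul hp (coord 1) (coord 2) (coord 0)

theorem aeval_eq_zero_of_rankOneParam_eq_zero {A : Type*} [CommSemiring R] [CommSemiring A]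
    [Algebra R A] {p : Fin 4 → A} (hp : p 0 * p 3 = p 1 * p 2) {f : MvPolynomial (Fin 4) R}
    (hf : rankOneParam R f = 0) : aeval p f = 0 :=
  ker_le_ker_of_factorsThrough (basisMonomials (Fin 4) R)
    (basisMonomials (Fin 3) R).linearIndependent (φ := (rankOneParam R).toLinearMap)
    (ψ := (aeval p).toLinearMap) rankOneParam_monomial_one
    (aeval_monomial_one_factorsThrough_rankOneExponent hp) hf

theorem ker_rankOneParam [CommRing R] :
    RingHom.ker (rankOneParam R) = Ideal.span {X 0 * X 3 - X 1 * X 2} := by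
  set I : Ideal (MvPolynomial (Fin 4) R) := Ideal.span {X 0 * X 3 - X 1 * X 2}
  apply le_antisymm
  · intro f hf
    have generic_relation : Ideal.Quotient.mkₐ R I (X 0) * Ideal.Quotient.mkₐ R I (X 3) =
        Ideal.Quotient.mkₐ R I (X 1) * Ideal.Quotient.mkₐ R I (X 2) := by
      rw [← map_mul, ← map_mul]
      exact Ideal.Quotient.eq.2 (Ideal.mem_span_singleton_self _)
    rw [← Ideal.Quotient.eq_zero_iff_mem, ← Ideal.Quotient.mkₐ_eq_mk R,
      aeval_unique (Ideal.Quotient.mkₐ R I)]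
    exact aeval_eq_zero_of_rankOneParam_eq_zero generic_relation hf
  · rw [Ideal.span_singleton_le_iff_mem, RingHom.mem_ker]
    simp only [rankOneParam, map_sub, map_mul, aeval_X, Matrix.cons_val]
    ring

theorem aeval_cons_C_rankOneParam [CommSemiring R] (β : R) (f : MvPolynomial (Fin 4) R) :
    aeval (Fin.cons (C β) X : Fin 3 → MvPolynomial (Fin 2) R) (rankOneParam R f) =
      aeval ![X 0, X 1, C β * X 0, C β * X 1] f := by
  rw [rankOneParam, ← AlgHom.comp_apply, comp_aeval]
  congr 2
  funext i
  have cons_one : (Fin.cons (C β) X : Fin 3 → MvPolynomial (Fin 2) R) 1 = X 0 := rfl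
  have cons_two : (Fin.cons (C β) X : Fin 3 → MvPolynomial (Fin 2) R) 2 = X 1 := rfl
  fin_cases i <;> simp [cons_one, cons_two]

end RankOne

theorem exists_aeval_cons_C_ne_zero {R : Type*} [CommRing R] [IsDomain R] [Infinite R] {n : ℕ}
    {p : MvPolynomial (Fin (n + 1)) R} (hp : p ≠ 0) :
    ∃ β : R, aeval (Fin.cons (C β) X : Fin (n + 1) → MvPolynomial (Fin n) R) p ≠ 0 := by
  contrapose! hp
  refine MvPolynomial.funext fun v => ?_
  have eval_tail_comp : (aeval (Fin.tail v)).comp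
      (aeval (Fin.cons (C (v 0)) X : Fin (n + 1) → MvPolynomial (Fin n) R)) = aeval v := by
    ext i
    cases i using Fin.cases <;> simp [Fin.tail]
  rw [← aeval_eq_eval, ← eval_tail_comp, AlgHom.comp_apply, hp, map_zero, map_zero]

theorem exists_beta_subst_ne_zero_general {R : Type*} [CommRing R] [IsDomain R] [Infinite R]
    (f : MvPolynomial (Fin 4) R)
    (hf : f ∉ Ideal.span {(X 0 * X 3 - X 1 * X 2 : MvPolynomial (Fin 4) R)}) :
    ∃ β : R,
      aeval (fun i : Fin 4 =>
        ![(X 0 : MvPolynomial (Fin 2) R), X 1, C β * X 0, C β * X 1] i) f ≠ 0 := by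
  have image_ne_zero : rankOneParam R f ≠ 0 := by
    rwa [← ker_rankOneParam, RingHom.mem_ker] at hf
  obtain ⟨β, hβ⟩ := exists_aeval_cons_C_ne_zero image_ne_zero
  exact ⟨β, aeval_cons_C_rankOneParam β f ▸ hβ⟩

/-- If `F` is an infinite field and `f ∈ F[x, y, x₁, y₁]` does not belong to
the ideal generated by `x·y₁ − y·x₁`, then there is `β ∈ F` such that the polynomial
`f(x, y, β·x, β·y) ∈ F[x, y]` is nonzero.  (Variables: `0 ↦ x`, `1 ↦ y`, `2 ↦ x₁`,
`3 ↦ y₁`.) -/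
theorem exists_beta_subst_ne_zero {F : Type*} [Field F] [Infinite F]
    (f : MvPolynomial (Fin 4) F)
    (hf : f ∉ Ideal.span {(X 0 * X 3 - X 1 * X 2 : MvPolynomial (Fin 4) F)}) :
    ∃ β : F,
      aeval (fun i : Fin 4 =>
        ![(X 0 : MvPolynomial (Fin 2) F), X 1, C β * X 0, C β * X 1] i) f ≠ 0 :=
  exists_beta_subst_ne_zero_general f hf
end

section
/- For every integer d ≥ 2: U_d + W_d = P_d^1 and U_d ∩ W_d = P_d^0, where P_d^1 is the K-span of all monomials of P of degree d and weight at most 1, U_d := span_K{x^i y^{d−i}, ∂(x^i y^{d−i}) : 0 ≤ i ≤ d}, W_d := P_d^0 + (x'y − xy')·P_{d−2}^0, and P_m^0 := span_K{x^m, x^{m−1}y, …, y^m}. -/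
open MvPolynomial

/-!
Write `Δ` for the `K`-linear derivation `x⁽ⁿ⁾ ↦ x⁽ⁿ⁺¹⁾`, `y⁽ⁿ⁾ ↦ y⁽ⁿ⁺¹⁾` and `w = x'y - xy'`. Since
`∂` and `Δ` agree on monomials, `U_d = P_d^0 + Δ P_d^0`, to be compared with
`W_d = P_d^0 + w P_{d-2}^0`.

For the sum, the chain rule and Euler's identity give, for a form `q(x, y)` of degree `d - 1`,
`d x' q = Δ(x q) + w ∂q/∂y` and `d y' q = Δ(y q) - w ∂q/∂x`, so that `Δ P_d^0 + w P_{d-2}^0` is all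
of `x' P_{d-1}^0 + y' P_{d-1}^0`, the weight-one part of `P_d^1`.

For the intersection, evaluate `p + Δ q = p' + w r` at `x⁽ⁿ⁾ = tⁿ x`, `y⁽ⁿ⁾ = tⁿ y`. The Wronskian
vanishes and Euler's identity gives `p + t d q = p'`; comparing `t = 0` with `t = 1` yields `q = 0`.
-/

namespace DiffPolyP

section Exponents

variable {σ : Type*}

lemma weight_snd_mapDomain (s : σ →₀ ℕ) :
    (s.mapDomain (·, (0 : ℕ))).weight Prod.snd = 0 := by
  rw [Finsupp.weight_apply, Finsupp.sum_mapDomain_index (by simp) (by simp [add_mul])]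
  simp

lemma weight_snd_eq_zero_iff {m : σ × ℕ →₀ ℕ} :
    m.weight Prod.snd = 0 ↔ ∃ s : σ →₀ ℕ, m = s.mapDomain (·, 0) := by
  refine ⟨fun hm ↦ ⟨m.mapDomain Prod.fst, ?_⟩, ?_⟩
  · have order_eq_zero : ∀ v ∈ m.support, (v.1, 0) = v := fun v hv ↦
      Prod.ext rfl (Nat.le_zero.mp
        (hm ▸ Finsupp.le_weight_of_ne_zero' Prod.snd (Finsupp.mem_support_iff.mp hv))).symm
    rw [← Finsupp.mapDomain_comp]
    exact Finsupp.mapDomain_id.symm.trans (Finsupp.mapDomain_congr order_eq_zero).symm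
  · rintro ⟨s, rfl⟩
    exact weight_snd_mapDomain s

lemma weight_snd_eq_one_iff {m : σ × ℕ →₀ ℕ} :
    m.weight Prod.snd = 1 ↔
      ∃ (a : σ) (s : σ →₀ ℕ), m = Finsupp.single (a, 1) 1 + s.mapDomain (·, 0) := by
  constructor
  · intro hm
    obtain ⟨⟨a, n⟩, hv, hne⟩ : ∃ v ∈ m.support, m v • v.2 ≠ 0 :=
      Finset.exists_ne_zero_of_sum_ne_zero (hm.trans_ne one_ne_zero)
    obtain ⟨m', rfl⟩ : ∃ m', m = Finsupp.single (a, n) 1 + m' :=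
      exists_add_of_le (Finsupp.single_le_iff.mpr
        (Nat.one_le_iff_ne_zero.mpr (Finsupp.mem_support_iff.mp hv)))
    have hn : n ≠ 0 := right_ne_zero_of_smul hne
    rw [map_add, Finsupp.weight_single, one_smul] at hm
    obtain ⟨s, rfl⟩ := weight_snd_eq_zero_iff.mp (show m'.weight Prod.snd = 0 by omega)
    obtain rfl : n = 1 := by omega
    exact ⟨a, s, rfl⟩
  · rintro ⟨a, s, rfl⟩
    rw [map_add, Finsupp.weight_single, weight_snd_mapDomain, one_smul]

end Exponents

section OrderZero

variable {σ R : Type*} [CommSemiring R]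

lemma homogeneousSubmodule_eq_span (n : ℕ) :
    homogeneousSubmodule σ R n =
      Submodule.span R ((monomial · 1) '' {s : σ →₀ ℕ | s.degree = n}) :=
  (homogeneousSubmodule_eq_finsupp_supported σ R n).trans (restrictSupport_eq_span R _)

/-- The embedding of ordinary polynomials into differential polynomials as those of order zero,
where `X (a, n)` encodes the `n`-th derivative of the indeterminate `a`. -/
noncomputable def orderZero : MvPolynomial σ R →ₐ[R] MvPolynomial (σ × ℕ) R :=
  rename (·, 0)

@[simp]
lemma orderZero_X (a : σ) : orderZero (X a : MvPolynomial σ R) = X (a, 0) :=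
  rename_X _ _

lemma orderZero_monomial (s : σ →₀ ℕ) (c : R) :
    orderZero (monomial s c) = monomial (s.mapDomain (·, 0)) c :=
  rename_monomial _ _ _

lemma monomial_mapDomain_eq_prod [Fintype σ] (s : σ →₀ ℕ) :
    monomial (s.mapDomain (·, (0 : ℕ))) (1 : R) = ∏ a, X (a, 0) ^ s a := by
  rw [← orderZero_monomial, monomial_eq, C_1, one_mul, Finsupp.prod_fintype _ _ (by simp)]
  simp only [map_prod, map_pow, orderZero_X]

lemma sum_X_mul_orderZero_pderiv [Fintype σ] {n : ℕ} {q : MvPolynomial σ R}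
    (hq : q.IsHomogeneous n) : ∑ a, X (a, 0) * orderZero (pderiv a q) = n • orderZero q := by
  simpa only [map_sum, map_mul, map_nsmul, orderZero_X] using
    congrArg orderZero hq.sum_X_mul_pderiv

variable (σ R) in
/-- The forms of degree `n` in the indeterminates themselves, without derivatives: `P_n^0` in any
number of indeterminates. -/
noncomputable def orderZeroForms (n : ℕ) : Submodule R (MvPolynomial (σ × ℕ) R) :=
  (homogeneousSubmodule σ R n).map orderZero.toLinearMap

lemma orderZero_mem_orderZeroForms {n : ℕ} {q : MvPolynomial σ R} (hq : q.IsHomogeneous n) :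
    orderZero q ∈ orderZeroForms σ R n :=
  Submodule.mem_map_of_mem (f := orderZero.toLinearMap) hq

lemma orderZeroForms_eq_span (n : ℕ) :
    orderZeroForms σ R n = Submodule.span R
      ((fun s : σ →₀ ℕ ↦ monomial (s.mapDomain (·, 0)) 1) '' {s | s.degree = n}) := by
  rw [orderZeroForms, homogeneousSubmodule_eq_span, Submodule.map_span, Set.image_image]
  simp only [AlgHom.toLinearMap_apply, orderZero_monomial]

variable (σ R) in
/-- The span of the monomials of degree `n + 1` and weight exactly `1`: the forms
`∑ a, X (a, 1) * q a` with `q a` of order zero and degree `n`. -/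
noncomputable def weightOneForms (n : ℕ) : Submodule R (MvPolynomial (σ × ℕ) R) :=
  ⨆ a : σ, (orderZeroForms σ R n).map (LinearMap.mulLeft R (X (a, 1)))

lemma X_mul_orderZero_mem_weightOneForms {n : ℕ} {q : MvPolynomial σ R} (hq : q.IsHomogeneous n)
    (a : σ) : X (a, 1) * orderZero q ∈ weightOneForms σ R n :=
  Submodule.mem_iSup_of_mem a
    (Submodule.mem_map_of_mem (f := LinearMap.mulLeft R _) (orderZero_mem_orderZeroForms hq))

lemma weightOneForms_eq_span (n : ℕ) :
    weightOneForms σ R n = Submodule.span R (⋃ a : σ, (fun s : σ →₀ ℕ ↦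
      monomial (Finsupp.single (a, 1) 1 + s.mapDomain (·, 0)) 1) '' {s | s.degree = n}) := by
  simp only [weightOneForms, orderZeroForms_eq_span, Submodule.map_span, Set.image_image,
    LinearMap.mulLeft_apply, Submodule.span_iUnion, X, monomial_mul, one_mul]

lemma restrictSupport_degree_weight_le_one (n : ℕ) :
    restrictSupport R {m : σ × ℕ →₀ ℕ | m.degree = n + 1 ∧ m.weight Prod.snd ≤ 1} =
      orderZeroForms σ R (n + 1) ⊔ weightOneForms σ R n := by
  rw [restrictSupport_eq_span, orderZeroForms_eq_span, weightOneForms_eq_span,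
    ← Submodule.span_union]
  congr 1
  ext f
  constructor
  · rintro ⟨m, ⟨hdeg, hwt⟩, rfl⟩
    rcases Nat.le_one_iff_eq_zero_or_eq_one.mp hwt with hwt | hwt
    · obtain ⟨s, rfl⟩ := weight_snd_eq_zero_iff.mp hwt
      exact .inl ⟨s, by simpa using hdeg, rfl⟩
    · obtain ⟨a, s, rfl⟩ := weight_snd_eq_one_iff.mp hwt
      exact .inr (Set.mem_iUnion.mpr ⟨a, s, by simpa [add_comm 1] using hdeg, rfl⟩)
  · rintro (⟨s, hs, rfl⟩ | hf)
    · exact ⟨_, ⟨by simpa using hs, (weight_snd_mapDomain s).trans_le zero_le_one⟩, rfl⟩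
    · obtain ⟨a, s, hs, rfl⟩ := Set.mem_iUnion.mp hf
      exact ⟨_, ⟨by simpa [add_comm 1] using hs, (weight_snd_eq_one_iff.mpr ⟨a, s, rfl⟩).le⟩, rfl⟩

end OrderZero

section ShiftDerivation

variable {σ R : Type*} [CommSemiring R]

variable (σ R) in
/-- The `R`-linear derivation `Δ` raising the order of each indeterminate by one. It is the linear
substitute for `∂`, with which it agrees on monomials. -/
noncomputable def shiftDerivation :
    Derivation R (MvPolynomial (σ × ℕ) R) (MvPolynomial (σ × ℕ) R) :=
  mkDerivation R fun v ↦ X (v.1, v.2 + 1)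

lemma shiftDerivation_X (v : σ × ℕ) : shiftDerivation σ R (X v) = X (v.1, v.2 + 1) :=
  mkDerivation_X _ _ _

lemma shiftDerivation_orderZero [Fintype σ] (q : MvPolynomial σ R) :
    shiftDerivation σ R (orderZero q) = ∑ a, X (a, 1) * orderZero (pderiv a q) := by
  classical
  induction q using MvPolynomial.induction_on with
  | C c => simp [orderZero]
  | add p q hp hq => simp only [map_add, hp, hq, mul_add, Finset.sum_add_distrib]
  | mul_X q b hq =>
    simp [hq, shiftDerivation_X, Pi.single_apply, mul_add, Finset.sum_add_distrib, Finset.mul_sum,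
      mul_left_comm, apply_ite, mul_comm, add_comm]

lemma map_shiftDerivation_orderZeroForms_le [Finite σ] (n : ℕ) :
    (orderZeroForms σ R (n + 1)).map (shiftDerivation σ R).toLinearMap ≤ weightOneForms σ R n := by
  cases nonempty_fintype σ
  rintro _ ⟨_, ⟨q, hq, rfl⟩, rfl⟩
  change shiftDerivation σ R (orderZero q) ∈ _
  rw [shiftDerivation_orderZero]
  exact Submodule.sum_mem _ fun a _ ↦ X_mul_orderZero_mem_weightOneForms hq.pderiv a

end ShiftDerivation

section EvalExp

variable {σ R : Type*} [CommSemiring R] (t : R)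

/-- Evaluation at `x⁽ⁿ⁾ = tⁿ x` for every indeterminate `x`, that is, along solutions of
`x' = t x`. It kills Wronskians and is used to separate `Δ P_d^0` from `w P_{d-2}^0`. -/
noncomputable def evalExp : MvPolynomial (σ × ℕ) R →ₐ[R] MvPolynomial σ R :=
  aeval fun v ↦ C t ^ v.2 * X v.1

@[simp]
lemma evalExp_X (v : σ × ℕ) : evalExp t (X v) = C t ^ v.2 * X v.1 :=
  aeval_X _ _

@[simp]
lemma evalExp_orderZero (q : MvPolynomial σ R) : evalExp t (orderZero q) = q := by
  have : (evalExp t).comp orderZero = AlgHom.id R (MvPolynomial σ R) := by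
    ext a
    simp
  exact DFunLike.congr_fun this q

lemma evalExp_shiftDerivation_orderZero [Finite σ] {n : ℕ} {q : MvPolynomial σ R}
    (hq : q.IsHomogeneous n) :
    evalExp t (shiftDerivation σ R (orderZero q)) = C t * n • q := by
  cases nonempty_fintype σ
  simp only [shiftDerivation_orderZero, map_sum, map_mul, evalExp_X, evalExp_orderZero, pow_one,
    mul_assoc, ← Finset.mul_sum, hq.sum_X_mul_pderiv]

end EvalExp

section TwoVariables

variable {K : Type} [Field K]

lemma P0_eq_orderZeroForms (n : ℕ) : P0 K n = orderZeroForms (Fin 2) K n := by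
  rw [P0, orderZeroForms_eq_span]
  congr 1
  ext f
  constructor
  · rintro ⟨i, hi, rfl⟩
    refine ⟨Finsupp.single 0 i + Finsupp.single 1 (n - i), ?_, ?_⟩
    · simp [-Finsupp.single_tsub, Nat.add_sub_cancel' hi]
    · simp [monomial_mapDomain_eq_prod]
  · rintro ⟨s, hs, rfl⟩
    obtain rfl : s 0 + s 1 = n := by simpa [Finsupp.degree_eq_sum] using hs
    exact ⟨s 0, Nat.le_add_right _ _, by
      simp only [monomial_mapDomain_eq_prod, Fin.prod_univ_two, Nat.add_sub_cancel_left]⟩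

lemma wdeg_eq_weight_snd (m : PVar →₀ ℕ) : wdeg m = m.weight Prod.snd :=
  Finsupp.sum_congr fun _ _ ↦ mul_comm _ _

lemma P1_eq_restrictSupport (n : ℕ) :
    P1 K n = restrictSupport K {m : PVar →₀ ℕ | m.degree = n ∧ m.weight Prod.snd ≤ 1} := by
  rw [P1, restrictSupport_eq_span]
  congr 1
  ext f
  simp only [wdeg_eq_weight_snd, Set.mem_ofPred, Set.mem_image, and_assoc, eq_comm (a := f)]
  rfl

lemma P1_succ (n : ℕ) : P1 K (n + 1) = P0 K (n + 1) ⊔ weightOneForms (Fin 2) K n := by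
  rw [P1_eq_restrictSupport, restrictSupport_degree_weight_le_one, P0_eq_orderZeroForms]

lemma wronsk_mul_orderZero (q : MvPolynomial (Fin 2) K) :
    wronsk K * orderZero q =
      X (0, 1) * orderZero (X 1 * q) - X (1, 1) * orderZero (X 0 * q) := by
  simp only [wronsk, map_mul, orderZero_X]
  ring

lemma evalExp_wronsk (t : K) : evalExp t (wronsk K) = 0 := by
  simp only [wronsk, map_sub, map_mul, evalExp_X]
  ring

section Euler

variable {n : ℕ} {q : MvPolynomial (Fin 2) K}

lemma succ_smul_X_zero_mul_orderZero (hq : q.IsHomogeneous n) :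
    (n + 1 : K) • (X (0, 1) * orderZero q) =
      shiftDerivation (Fin 2) K (orderZero (X 0 * q)) + wronsk K * orderZero (pderiv 1 q) := by
  have euler := sum_X_mul_orderZero_pderiv hq
  simp only [Fin.sum_univ_two, nsmul_eq_mul] at euler
  simp only [map_mul, orderZero_X, Derivation.leibniz, shiftDerivation_X,
    shiftDerivation_orderZero, Fin.sum_univ_two, smul_eq_mul, smul_eq_C_mul, map_add, map_natCast,
    map_one, wronsk]
  linear_combination -X (0, 1) * euler

lemma succ_smul_X_one_mul_orderZero (hq : q.IsHomogeneous n) :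
    (n + 1 : K) • (X (1, 1) * orderZero q) =
      shiftDerivation (Fin 2) K (orderZero (X 1 * q)) - wronsk K * orderZero (pderiv 0 q) := by
  have euler := sum_X_mul_orderZero_pderiv hq
  simp only [Fin.sum_univ_two, nsmul_eq_mul] at euler
  simp only [map_mul, orderZero_X, Derivation.leibniz, shiftDerivation_X,
    shiftDerivation_orderZero, Fin.sum_univ_two, smul_eq_mul, smul_eq_C_mul, map_add, map_natCast,
    map_one, wronsk]
  linear_combination -X (1, 1) * euler

end Euler

lemma map_wronsk_P0_le (n : ℕ) :
    (P0 K n).map (LinearMap.mulLeft K (wronsk K)) ≤ weightOneForms (Fin 2) K (n + 1) := by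
  rw [P0_eq_orderZeroForms]
  rintro _ ⟨_, ⟨q, hq, rfl⟩, rfl⟩
  change wronsk K * orderZero q ∈ _
  have X_mul_isHomogeneous (a : Fin 2) : (X a * q).IsHomogeneous (n + 1) :=
    add_comm 1 n ▸ (isHomogeneous_X K a).mul hq
  rw [wronsk_mul_orderZero]
  exact Submodule.sub_mem _ (X_mul_orderZero_mem_weightOneForms (X_mul_isHomogeneous 1) 0)
    (X_mul_orderZero_mem_weightOneForms (X_mul_isHomogeneous 0) 1)

lemma weightOneForms_le_map_shiftDerivation_sup_map_wronsk {n : ℕ} (hn : ((n + 2 : ℕ) : K) ≠ 0) :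
    weightOneForms (Fin 2) K (n + 1) ≤
      (P0 K (n + 2)).map (shiftDerivation (Fin 2) K).toLinearMap ⊔
        (P0 K n).map (LinearMap.mulLeft K (wronsk K)) := by
  rw [P0_eq_orderZeroForms, P0_eq_orderZeroForms]
  refine iSup_le fun a ↦ ?_
  rintro _ ⟨_, ⟨q, hq, rfl⟩, rfl⟩
  change X (a, 1) * orderZero q ∈ _
  have shift_mem (b : Fin 2) : shiftDerivation (Fin 2) K (orderZero (X b * q)) ∈
      (orderZeroForms (Fin 2) K (n + 2)).map (shiftDerivation (Fin 2) K).toLinearMap :=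
    Submodule.mem_map_of_mem (f := (shiftDerivation (Fin 2) K).toLinearMap)
      (orderZero_mem_orderZeroForms (add_comm 1 (n + 1) ▸ (isHomogeneous_X K b).mul hq))
  have wronsk_mem (b : Fin 2) : wronsk K * orderZero (pderiv b q) ∈
      (orderZeroForms (Fin 2) K n).map (LinearMap.mulLeft K (wronsk K)) :=
    Submodule.mem_map_of_mem (f := LinearMap.mulLeft K _) (orderZero_mem_orderZeroForms hq.pderiv)
  have hn' : ((n + 1 : ℕ) : K) + 1 ≠ 0 := by exact_mod_cast hn
  rw [← Submodule.smul_mem_iff _ hn']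
  fin_cases a
  · exact succ_smul_X_zero_mul_orderZero hq ▸ Submodule.add_mem_sup (shift_mem 0) (wronsk_mem 1)
  · exact succ_smul_X_one_mul_orderZero hq ▸ Submodule.sub_mem_sup (shift_mem 1) (wronsk_mem 0)

lemma map_shiftDerivation_P0_sup_map_wronsk_P0 {n : ℕ} (hn : ((n + 2 : ℕ) : K) ≠ 0) :
    (P0 K (n + 2)).map (shiftDerivation (Fin 2) K).toLinearMap ⊔
        (P0 K n).map (LinearMap.mulLeft K (wronsk K)) =
      weightOneForms (Fin 2) K (n + 1) :=
  have map_shiftDerivation_le := map_shiftDerivation_orderZeroForms_le (σ := Fin 2) (R := K) (n + 1)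
  le_antisymm
    (sup_le (P0_eq_orderZeroForms (K := K) (n + 2) ▸ map_shiftDerivation_le) (map_wronsk_P0_le n))
    (weightOneForms_le_map_shiftDerivation_sup_map_wronsk hn)

end TwoVariables

end DiffPolyP

namespace IsDiffStructureP

open DiffPolyP

section CommRing

variable {K : Type} [CommRing K] {δ : K → K} {D : DiffPolyP K → DiffPolyP K}

/-- `D` as a derivation over `ℤ`; it is not `K`-linear unless `δ = 0`. -/
noncomputable def derivation (hD : IsDiffStructureP δ D) :
    Derivation ℤ (DiffPolyP K) (DiffPolyP K) :=
  Derivation.mk' (AddMonoidHom.mk' D hD.2.2.1).toIntLinearMap fun f g ↦ by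
    simpa [mul_comm, add_comm] using hD.2.2.2.1 f g

lemma eqOn_shiftDerivation_adjoin_X (hD : IsDiffStructureP δ D) :
    Set.EqOn D (shiftDerivation (Fin 2) K)
      (Algebra.adjoin ℤ (Set.range X) : Subalgebra ℤ (DiffPolyP K)) := by
  refine Derivation.eqOn_adjoin (D1 := hD.derivation)
    (D2 := (shiftDerivation (Fin 2) K).restrictScalars ℤ) ?_
  rintro _ ⟨v, rfl⟩
  exact (hD.2.2.2.2.2 v).trans (shiftDerivation_X v).symm

lemma apply_X_pow_mul_X_pow (hD : IsDiffStructureP δ D) (i j : ℕ) :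
    D (X (0, 0) ^ i * X (1, 0) ^ j) =
      shiftDerivation (Fin 2) K (X (0, 0) ^ i * X (1, 0) ^ j) :=
  have X_mem (v : PVar) : X v ∈ Algebra.adjoin ℤ (Set.range (X : PVar → DiffPolyP K)) :=
    Algebra.subset_adjoin ⟨v, rfl⟩
  hD.eqOn_shiftDerivation_adjoin_X (mul_mem (pow_mem (X_mem _) i) (pow_mem (X_mem _) j))

end CommRing

variable {K : Type} [Field K] {δ : K → K} {D : DiffPolyP K → DiffPolyP K}

lemma Ud_eq_P0_sup_map_shiftDerivation (hD : IsDiffStructureP δ D) (d : ℕ) :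
    Ud K D d = P0 K d ⊔ (P0 K d).map (shiftDerivation (Fin 2) K).toLinearMap := by
  rw [Ud, P0, Submodule.map_span, ← Submodule.span_union]
  congr 1
  ext f
  constructor
  · rintro ⟨i, hi, rfl | rfl⟩
    · exact .inl ⟨i, hi, rfl⟩
    · exact .inr ⟨_, ⟨i, hi, rfl⟩, (hD.apply_X_pow_mul_X_pow i (d - i)).symm⟩
  · rintro (⟨i, hi, rfl⟩ | ⟨_, ⟨i, hi, rfl⟩, rfl⟩)
    · exact ⟨i, hi, .inl rfl⟩
    · exact ⟨i, hi, .inr (hD.apply_X_pow_mul_X_pow i (d - i)).symm⟩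

lemma Ud_inf_Wd_le_P0 (hD : IsDiffStructureP δ D) {d : ℕ} (hd : (d : K) ≠ 0) :
    Ud K D d ⊓ Wd K d ≤ P0 K d := by
  rw [hD.Ud_eq_P0_sup_map_shiftDerivation, Wd, P0_eq_orderZeroForms, P0_eq_orderZeroForms]
  rintro f ⟨hU, hW⟩
  obtain ⟨_, ⟨p, hp, rfl⟩, _, ⟨_, ⟨q, hq, rfl⟩, rfl⟩, rfl⟩ := Submodule.mem_sup.mp hU
  obtain ⟨_, ⟨p', -, rfl⟩, _, ⟨r, -, rfl⟩, h⟩ := Submodule.mem_sup.mp hW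
  have evalExp_eq (t : K) : p' = p + C t * d • q := by
    simpa [evalExp_wronsk, evalExp_shiftDerivation_orderZero t hq] using congrArg (evalExp t) h
  have hq0 : q = 0 := by
    have smul_eq_zero : (d : K) • q = 0 := by
      simpa [Nat.cast_smul_eq_nsmul] using (evalExp_eq 0).symm.trans (evalExp_eq 1)
    exact (smul_eq_zero_iff_right hd).mp smul_eq_zero
  simpa [hq0] using orderZero_mem_orderZeroForms hp

end IsDiffStructureP

open DiffPolyP in
theorem Ud_sup_Wd_and_Ud_inf_Wd_general {K : Type} [Field K]
    (δ : K → K) (D : DiffPolyP K → DiffPolyP K)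
    (hD : IsDiffStructureP δ D)
    (d : ℕ) (hd : 2 ≤ d) (hdK : (d : K) ≠ 0) :
    Ud K D d ⊔ Wd K d = P1 K d ∧ Ud K D d ⊓ Wd K d = P0 K d := by
  have hU := hD.Ud_eq_P0_sup_map_shiftDerivation d
  refine ⟨?_, le_antisymm (hD.Ud_inf_Wd_le_P0 hdK) (le_inf (hU ▸ le_sup_left) le_sup_left)⟩
  obtain ⟨n, rfl⟩ := Nat.exists_eq_add_of_le' hd
  rw [hU, Wd, ← sup_sup_distrib_left, Nat.add_sub_cancel, P1_succ,
    map_shiftDerivation_P0_sup_map_wronsk_P0 hdK]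

/-- For every `d ≥ 2`: `U_d + W_d = P_d^1` and `U_d ∩ W_d = P_d^0`. -/
theorem Ud_sup_Wd_and_Ud_inf_Wd {K : Type} [Field K] [CharZero K]
    (δ : K → K) (D : DiffPolyP K → DiffPolyP K)
    (hD : IsDiffStructureP δ D)
    (d : ℕ) (hd : 2 ≤ d) :
    Ud K D d ⊔ Wd K d = P1 K d ∧ Ud K D d ⊓ Wd K d = P0 K d :=
  Ud_sup_Wd_and_Ud_inf_Wd_general δ D hD d hd (Nat.cast_ne_zero.mpr (by omega))
end
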